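/- There are families (G_n) of finite connected planar graphs and constants C₁, C₂ > 0 such that all vertices of G_n and of the dual G_n* have degree at most 6, Diam G_n + Diam G_n* ≤ C₁·n, yet for every spanning tree T of G_n (with dual spanning tree T*), Diam T + Diam T* ≥ C₂·n². In particular there is no constant C such that every finite connected planar graph G admits a spanning tree T with Diam T ≤ C·Diam G and Diam T* ≤ C·Diam G*. -/

import Mathlib

/-- `edgeReach ends S u v`: `u` and `v` are joined by a walk using edges from `S`,
in the multigraph whose edge `e` has endpoints `ends e`. -/
def edgeReach {V E : Type} (ends : E → Sym2 V) (S : Set E) : V → V → Prop :=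
  Relation.ReflTransGen fun u v => ∃ e ∈ S, ends e = s(u, v)

/-- The spanning subgraph with edge set `S` is connected (spans all vertices). -/
def edgeConn {V E : Type} (ends : E → Sym2 V) (S : Set E) : Prop :=
  ∀ u v : V, edgeReach ends S u v

/-- The edge set `S` is acyclic: every edge of `S` is a bridge of `S`
(its endpoints are not joined avoiding it); in particular loops are cycles. -/
def edgeAcyclic {V E : Type} (ends : E → Sym2 V) (S : Set E) : Prop :=
  ∀ e ∈ S, ∀ u v : V, ends e = s(u, v) → ¬ edgeReach ends (S \ {e}) u v

/-- `S` is the edge set of a spanning tree: a connected acyclic spanning subgraph. -/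
def IsSpanningTree {V E : Type} (ends : E → Sym2 V) (S : Set E) : Prop :=
  edgeConn ends S ∧ edgeAcyclic ends S

/-- A finite connected multigraph `G` embedded in the plane together with its planar dual
`G*`, presented combinatorially: `V` is the vertex set of `G`, `F` the set of faces of `G`
(the vertex set of `G*`, including the unbounded face), and each edge `e` of `G` has
endpoints `ends e` in `G` and corresponds to the dual edge of `G*` joining the two faces
`dualEnds e` on either side of it.  The axioms record the standard facts about plane
duality: both graphs are connected, and a set `S` of edges is acyclic in `G` iff the duals
of the complementary edges span `G*` connectedly, and dually. -/
structure PlaneDualPair where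
  V : Type
  F : Type
  E : Type
  [finV : Finite V]
  [finF : Finite F]
  [finE : Finite E]
  [neV : Nonempty V]
  [neF : Nonempty F]
  ends : E → Sym2 V
  dualEnds : E → Sym2 F
  conn : edgeConn ends Set.univ
  dual_conn : edgeConn dualEnds Set.univ
  acyclic_iff_dual_conn : ∀ S : Set E, edgeAcyclic ends S ↔ edgeConn dualEnds Sᶜ
  conn_iff_dual_acyclic : ∀ S : Set E, edgeConn ends S ↔ edgeAcyclic dualEnds Sᶜ

/-- `edgeReachIn ends S k u v`: there is a walk of length `k` from `u` to `v` using
edges from `S`. -/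
def edgeReachIn {V E : Type} (ends : E → Sym2 V) (S : Set E) : ℕ → V → V → Prop
  | 0, u, v => u = v
  | k + 1, u, v => ∃ w, (∃ e ∈ S, ends e = s(u, w)) ∧ edgeReachIn ends S k w v

/-- Graph distance in the spanning subgraph with edge set `S` (length of a shortest walk). -/
noncomputable def edgeDist {V E : Type} (ends : E → Sym2 V) (S : Set E) (u v : V) : ℕ :=
  sInf {k | edgeReachIn ends S k u v}

/-- Diameter of the spanning subgraph with edge set `S`: the maximal distance between
two vertices. -/
noncomputable def edgeDiam {V E : Type} (ends : E → Sym2 V) (S : Set E) : ℕ :=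
  sInf {D | ∀ u v : V, edgeDist ends S u v ≤ D}

/-- Degree of a vertex in the multigraph (loops counted twice). -/
noncomputable def vertDegree {V E : Type} (ends : E → Sym2 V) (v : V) : ℕ :=
  {e | v ∈ ends e}.ncard + {e | ends e = s(v, v)}.ncard

/-!
Let `T` be a spanning tree of a plane graph with maximal degree `Δ`. Walking once around `T`
visits every dart, and collecting the vertices in the order of their first visit gives a sweep of
the graph. The part of the walk before a given time is separated from the rest by a path in `T`
and a path in `T*`; the vertex set swept so far therefore has an edge boundary of size
`O(Δ (Diam T + Diam T*))`. So it suffices to find graphs of small diameter in which every sweep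
has a large boundary at some time.

Such graphs come from a ternary tree of depth `k` all of whose edges are thickened to `h` parallel
chords of a disc, with `h` concentric rings around the disc. A sweep completes its first line
(two columns of the rings joined by a chord) in one leaf of each of the three subtrees at different
times. At the middle time, one of the other two subtrees already contains a line and the third one
contains none, so the sweep has to cut `h` further edges outside the middle subtree. By induction
some boundary has at least `(k + 1) h` edges. Taking `h` and `k` linear in `n`, there are only
exponentially many points on the rings; halving the number of points `O(n)` times in further rings
closes up the graph with diameter `O(n)`, for the graph and its dual, and keeps degrees at most `6`.
-/

/-! ### Walks, distances and sweeps -/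

section Walks

variable {V E : Type} {ends : E → Sym2 V} {S S' : Set E} {u v w : V} {k l : ℕ}

theorem edgeReach.single {e : E} (he : e ∈ S) (huv : ends e = s(u, v)) : edgeReach ends S u v :=
  Relation.ReflTransGen.single ⟨e, he, huv⟩

theorem edgeReach.symm (h : edgeReach ends S u v) : edgeReach ends S v u :=
  have : Std.Symm fun u v => ∃ e ∈ S, ends e = s(u, v) :=
    ⟨fun _ _ ⟨e, he, hs⟩ => ⟨e, he, hs.trans Sym2.eq_swap⟩⟩
  Relation.ReflTransGen.stdSymm.symm _ _ h

theorem edgeReach.mono (hS : S ⊆ S') (h : edgeReach ends S u v) : edgeReach ends S' u v :=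
  Relation.ReflTransGen.mono (fun _ _ ⟨e, he, hs⟩ => ⟨e, hS he, hs⟩) _ _ h

theorem edgeReach.mem_of_closed {X : Set V}
    (hX : ∀ e ∈ S, ∀ x y, ends e = s(x, y) → x ∈ X → y ∈ X)
    (h : edgeReach ends S u v) (hu : u ∈ X) : v ∈ X := by
  induction h with
  | refl => exact hu
  | tail _ hstep ih =>
    obtain ⟨e, he, hs⟩ := hstep
    exact hX e he _ _ hs ih

theorem edgeReachIn.single {e : E} (he : e ∈ S) (huv : ends e = s(u, v)) :
    edgeReachIn ends S 1 u v :=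
  ⟨v, ⟨e, he, huv⟩, rfl⟩

theorem edgeReachIn.trans (h : edgeReachIn ends S k u v) (h' : edgeReachIn ends S l v w) :
    edgeReachIn ends S (k + l) u w := by
  induction k generalizing u with
  | zero =>
    obtain rfl : u = v := h
    rwa [Nat.zero_add]
  | succ k ih =>
    obtain ⟨x, hx, hxv⟩ := h
    rw [Nat.succ_add]
    exact ⟨x, hx, ih hxv⟩

theorem edgeReachIn.symm (h : edgeReachIn ends S k u v) : edgeReachIn ends S k v u := by
  induction k generalizing u with
  | zero => exact Eq.symm h
  | succ k ih =>
    obtain ⟨x, ⟨e, he, hs⟩, hxv⟩ := h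
    exact (ih hxv).trans (.single he (hs.trans Sym2.eq_swap))

theorem edgeReach.exists_edgeReachIn (h : edgeReach ends S u v) :
    ∃ k, edgeReachIn ends S k u v := by
  induction h with
  | refl => exact ⟨0, rfl⟩
  | tail _ hstep ih =>
    obtain ⟨k, hk⟩ := ih
    obtain ⟨e, he, hs⟩ := hstep
    exact ⟨k + 1, hk.trans (.single he hs)⟩

theorem edgeReachIn.exists_finset_card_le (h : edgeReachIn ends S k u v) :
    ∃ W : Finset E, W.card ≤ k ∧ edgeReach ends (S ∩ W) u v := by
  classical
  induction k generalizing u with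
  | zero =>
    obtain rfl : u = v := h
    exact ⟨∅, le_rfl, Relation.ReflTransGen.refl⟩
  | succ k ih =>
    obtain ⟨x, ⟨e, he, hs⟩, hxv⟩ := h
    obtain ⟨W, hW, hreach⟩ := ih hxv
    refine ⟨insert e W, (Finset.card_insert_le _ _).trans (by omega),
      Relation.ReflTransGen.head ⟨e, ⟨he, by simp⟩, hs⟩ (hreach.mono ?_)⟩
    exact Set.inter_subset_inter_right _ (by simp)

theorem edgeDiam_le_two_mul_of_center {D : ℕ} (c : V)
    (h : ∀ u, ∃ k ≤ D, edgeReachIn ends S k u c) : edgeDiam ends S ≤ 2 * D := by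
  refine Nat.sInf_le fun u v => ?_
  obtain ⟨k, hk, hu⟩ := h u
  obtain ⟨l, hl, hv⟩ := h v
  have hdist : edgeDist ends S u v ≤ k + l := Nat.sInf_le (hu.trans hv.symm)
  omega

theorem edgeDist_le_edgeDiam [Finite V] (u v : V) : edgeDist ends S u v ≤ edgeDiam ends S := by
  obtain ⟨B, hB⟩ := (Set.finite_range fun p : V × V => edgeDist ends S p.1 p.2).bddAbove
  have hne : {D | ∀ u v : V, edgeDist ends S u v ≤ D}.Nonempty := ⟨B, fun u v => hB ⟨(u, v), rfl⟩⟩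
  exact Nat.sInf_mem hne u v

theorem ncard_separating_le_edgeDiam [Finite V] (hS : edgeConn ends S) (u v : V) {Q : Set E}
    (hQ : ∀ e ∈ Q, ¬ edgeReach ends (S \ {e}) u v) : Q.ncard ≤ edgeDiam ends S := by
  have hwalk : edgeReachIn ends S (edgeDist ends S u v) u v :=
    Nat.sInf_mem (hS u v).exists_edgeReachIn
  obtain ⟨W, hW, hreach⟩ := hwalk.exists_finset_card_le
  have hQW : Q ⊆ W := by
    intro e he
    by_contra heW
    exact hQ e he (hreach.mono fun f hf => ⟨hf.1, fun hfe => heW (hfe ▸ hf.2)⟩)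
  calc Q.ncard ≤ (W : Set E).ncard := Set.ncard_le_ncard hQW W.finite_toSet
    _ = W.card := Set.ncard_coe_finset W
    _ ≤ edgeDiam ends S := hW.trans (edgeDist_le_edgeDiam u v)

end Walks

/-- The edge boundary of a vertex set `A`: the edges with one endpoint in `A` and the other
outside. -/
def edgeBoundary {V E : Type} (ends : E → Sym2 V) (A : Set V) : Set E :=
  {e | ∃ x y, ends e = s(x, y) ∧ x ∈ A ∧ y ∉ A}

theorem mem_edgeBoundary_of_mem_edgeBoundary_image {V V' E E' : Type} {ends : E → Sym2 V}
    {ends' : E' → Sym2 V'} {f : V → V'} (hf : Function.Injective f) {A : Set V} {e : E} {e' : E'}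
    (hends : ends' e' = (ends e).map f) (he : e' ∈ edgeBoundary ends' (f '' A)) :
    e ∈ edgeBoundary ends A := by
  obtain ⟨x, y, hxy, hx, hy⟩ := he
  obtain ⟨⟨u, v⟩, huv⟩ := Quot.exists_rep (ends e)
  replace huv : s(u, v) = ends e := huv
  rw [hends, ← huv, Sym2.map_mk, Sym2.eq_iff] at hxy
  rcases hxy with ⟨rfl, rfl⟩ | ⟨rfl, rfl⟩ <;> rw [hf.mem_set_image] at hx hy
  exacts [⟨u, v, huv.symm, hx, hy⟩, ⟨v, u, huv.symm.trans Sym2.eq_swap, hx, hy⟩]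

/-- A sweep of `X`: an increasing sequence of sets that starts empty, eventually covers `X`, and
gains at most one element at a time. Elements outside `X` may be swept too. -/
structure IsSweep {α : Type} (A : ℕ → Set α) (X : Set α) : Prop where
  mono : Monotone A
  zero : A 0 = ∅
  exists_subset : ∃ N, X ⊆ A N
  step : ∀ t, ∃ w, A (t + 1) ⊆ insert w (A t)

theorem IsSweep.image {α β : Type} {A : ℕ → Set α} {X : Set α} (hA : IsSweep A X) (f : α → β) :
    IsSweep (fun t => f '' A t) (f '' X) where
  mono _ _ hst := Set.image_mono (hA.mono hst)
  zero := by rw [hA.zero, Set.image_empty]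
  exists_subset := hA.exists_subset.imp fun _ hN => Set.image_mono hN
  step t := by
    obtain ⟨w, hw⟩ := hA.step t
    exact ⟨f w, (Set.image_mono hw).trans (Set.image_insert_eq ..).subset⟩

/-! ### Plane duality from orthogonality and Euler's formula -/

/-- The component of `x` in the spanning subgraph with edge set `S`. -/
def edgeComponent {V E : Type} (ends : E → Sym2 V) (S : Set E) (x : V) : Set V :=
  {y | edgeReach ends S x y}

section Coboundary

variable {V E : Type} {ends : E → Sym2 V} {S : Set E} {u v x : V} {e : E}

theorem self_mem_edgeComponent (x : V) : x ∈ edgeComponent ends S x :=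
  Relation.ReflTransGen.refl

theorem mem_edgeComponent_iff_of_ends (he : e ∈ S) (huv : ends e = s(u, v)) :
    u ∈ edgeComponent ends S x ↔ v ∈ edgeComponent ends S x :=
  ⟨fun h => h.trans (edgeReach.single he huv), fun h => h.trans (edgeReach.single he huv).symm⟩

/-- The coboundary map over `ZMod 2`: the value at an edge is the sum of the values at its two
endpoints, so the indicator of a vertex set goes to the indicator of its edge boundary. -/
def coboundary (ends : E → Sym2 V) : (V → ZMod 2) →ₗ[ZMod 2] (E → ZMod 2) where
  toFun g e := (ends e).lift ⟨fun x y => g x + g y, fun _ _ => add_comm _ _⟩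
  map_add' g g' := by
    ext e
    induction h : ends e with
    | h x y => simp only [h, Sym2.lift_mk, Pi.add_apply, add_add_add_comm]
  map_smul' c g := by
    ext e
    induction h : ends e with
    | h x y => simp only [h, Sym2.lift_mk, Pi.smul_apply, smul_add, RingHom.id_apply]

theorem coboundary_of_ends (huv : ends e = s(u, v)) (g : V → ZMod 2) :
    coboundary ends g e = g u + g v := by
  change (ends e).lift _ = _
  rw [huv, Sym2.lift_mk]

theorem edgeReach.eq_of_coboundary_eq_zero {g : V → ZMod 2}
    (hg : ∀ e ∈ S, coboundary ends g e = 0) (h : edgeReach ends S u v) : g u = g v := by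
  refine h.mem_of_closed (X := {w | g u = g w}) (fun e he x y hs hx => ?_) rfl
  have hxy := hg e he
  rw [coboundary_of_ends hs, CharTwo.add_eq_zero] at hxy
  exact Eq.trans hx hxy

theorem coboundary_indicator_edgeComponent (he : e ∈ S) (x : V) :
    coboundary ends ((edgeComponent ends S x).indicator 1) e = 0 := by
  classical
  induction huv : ends e with
  | h u v =>
    rw [coboundary_of_ends huv]
    simp only [Set.indicator, mem_edgeComponent_iff_of_ends he huv, Pi.one_apply]
    exact CharTwo.add_self_eq_zero _

theorem coboundary_indicator_of_ends {A : Set V} (huv : ends e = s(u, v)) (hu : u ∈ A)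
    (hv : v ∉ A) : coboundary ends (A.indicator 1) e = 1 := by
  rw [coboundary_of_ends huv, Set.indicator_of_mem hu, Set.indicator_of_notMem hv, Pi.one_apply,
    add_zero]

theorem card_le_finrank_range_coboundary_add_one [Finite V]
    (hconn : edgeConn ends Set.univ) :
    Nat.card V ≤ Module.finrank (ZMod 2) (LinearMap.range (coboundary ends)) + 1 := by
  have := Fintype.ofFinite V
  rcases isEmpty_or_nonempty V with _ | ⟨⟨v₀⟩⟩
  · simp
  have hker : Module.finrank (ZMod 2) (LinearMap.ker (coboundary ends)) ≤ 1 := by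
    refine Submodule.finrank_le_one_iff_isPrincipal _ |>.2 ⟨⟨1, le_antisymm ?_ ?_⟩⟩
    · intro g hg
      refine Submodule.mem_span_singleton.2 ⟨g v₀, funext fun v => ?_⟩
      have hconst := (hconn v₀ v).eq_of_coboundary_eq_zero (g := g) fun e _ => congrFun hg e
      simp [hconst]
    · refine (Submodule.span_singleton_le_iff_mem _ _).2 (funext fun e => ?_)
      induction huv : ends e with
      | h u v => rw [coboundary_of_ends huv]; exact CharTwo.add_self_eq_zero _
  have hrank := LinearMap.finrank_range_add_finrank_ker (coboundary ends)
  rw [Module.finrank_fintype_fun_eq_card, ← Nat.card_eq_fintype_card] at hrank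
  omega

theorem edgeReach.exists_chain [Fintype E] (h : edgeReach ends S u v) :
    ∃ z : E → ZMod 2, (∀ e ∉ S, z e = 0) ∧ ∀ g, coboundary ends g ⬝ᵥ z = g u + g v := by
  classical
  induction h with
  | refl => exact ⟨0, fun _ _ => rfl, fun g => by rw [dotProduct_zero, CharTwo.add_self_eq_zero]⟩
  | @tail x y _ hstep ih =>
    obtain ⟨z, hzS, hz⟩ := ih
    obtain ⟨e, he, hs⟩ := hstep
    refine ⟨z + Pi.single e 1, fun f hf => ?_, fun g => ?_⟩
    · have hfe : f ≠ e := fun h => hf (h ▸ he)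
      simp [hzS f hf, hfe]
    · rw [dotProduct_add, hz, dotProduct_single_one, coboundary_of_ends hs,
        add_assoc, CharTwo.add_cancel_left]

end Coboundary

section Duality

variable {V F E : Type} [Fintype E] {ends : E → Sym2 V} {dualEnds : E → Sym2 F} {S : Set E}

theorem finrank_add_finrank_orthogonal_dotProductBilin {K : Type} [Field K]
    (W : Submodule K (E → K)) :
    Module.finrank K W +
      Module.finrank K (LinearMap.BilinForm.orthogonal (dotProductBilin K K) W) = Nat.card E := by
  have hker : LinearMap.ker (dotProductBilin K K : (E → K) →ₗ[K] (E → K) →ₗ[K] K) = ⊥ :=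
    (Submodule.eq_bot_iff _).2 fun w hw => dotProduct_eq_zero w fun z => LinearMap.congr_fun hw z
  rw [LinearMap.BilinForm.finrank_add_finrank_orthogonal', hker, inf_bot_eq, finrank_bot,
    add_zero, Module.finrank_fintype_fun_eq_card, Nat.card_eq_fintype_card]

theorem mem_range_coboundary_of_orthogonal [Finite V] [Finite F]
    (hconn : edgeConn ends Set.univ) (hdual : edgeConn dualEnds Set.univ)
    (horth : ∀ g f, coboundary ends g ⬝ᵥ coboundary dualEnds f = 0)
    (heuler : Nat.card V + Nat.card F = Nat.card E + 2)
    {z : E → ZMod 2} (hz : ∀ g, coboundary ends g ⬝ᵥ z = 0) :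
    z ∈ LinearMap.range (coboundary dualEnds) := by
  have hle : LinearMap.range (coboundary dualEnds) ≤ LinearMap.BilinForm.orthogonal
      (dotProductBilin (ZMod 2) (ZMod 2)) (LinearMap.range (coboundary ends)) := by
    rintro _ ⟨f, rfl⟩ _ ⟨g, rfl⟩
    exact horth g f
  have hcuts := card_le_finrank_range_coboundary_add_one hconn
  have hdualCuts := card_le_finrank_range_coboundary_add_one hdual
  have hcycles := finrank_add_finrank_orthogonal_dotProductBilin (LinearMap.range (coboundary ends))
  rw [Submodule.eq_of_le_of_finrank_le hle (by omega)]
  rintro _ ⟨g, rfl⟩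
  exact hz g

theorem edgeConn_compl_of_edgeAcyclic (hdual : edgeConn dualEnds Set.univ)
    (horth : ∀ g f, coboundary ends g ⬝ᵥ coboundary dualEnds f = 0)
    (hS : edgeAcyclic ends S) : edgeConn dualEnds Sᶜ := by
  intro x y
  by_contra hxy
  set f : F → ZMod 2 := (edgeComponent dualEnds Sᶜ x).indicator 1
  obtain ⟨e, he⟩ : ∃ e, coboundary dualEnds f e ≠ 0 := by
    by_contra! hzero
    have hfxy := (hdual x y).eq_of_coboundary_eq_zero fun e _ => hzero e
    have hfx : f x = 1 := Set.indicator_of_mem (self_mem_edgeComponent x) _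
    have hfy : f y = 0 := Set.indicator_of_notMem hxy _
    exact one_ne_zero (hfx.symm.trans (hfxy.trans hfy))
  have heS : e ∈ S := by
    by_contra heS
    exact he (coboundary_indicator_edgeComponent heS x)
  induction huv : ends e with
  | h u v =>
    set g : V → ZMod 2 := (edgeComponent ends (S \ {e}) u).indicator 1
    refine he ?_
    calc coboundary dualEnds f e = coboundary ends g e * coboundary dualEnds f e := by
          rw [coboundary_indicator_of_ends huv (self_mem_edgeComponent u) (hS e heS u v huv),
            one_mul]
      _ = coboundary ends g ⬝ᵥ coboundary dualEnds f := by
          rw [dotProduct, Fintype.sum_eq_single e]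
          intro e' hne
          by_cases he' : e' ∈ S
          · have hg : coboundary ends g e' = 0 :=
              coboundary_indicator_edgeComponent (S := S \ {e}) ⟨he', hne⟩ u
            rw [hg, zero_mul]
          · have hf : coboundary dualEnds f e' = 0 := coboundary_indicator_edgeComponent he' x
            rw [hf, mul_zero]
      _ = 0 := horth g f

theorem edgeAcyclic_of_edgeConn_compl [Finite V] [Finite F]
    (hconn : edgeConn ends Set.univ) (hdual : edgeConn dualEnds Set.univ)
    (horth : ∀ g f, coboundary ends g ⬝ᵥ coboundary dualEnds f = 0)
    (heuler : Nat.card V + Nat.card F = Nat.card E + 2)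
    (hS : edgeConn dualEnds Sᶜ) : edgeAcyclic ends S := by
  classical
  intro e he u v huv hreach
  obtain ⟨z, hzS, hz⟩ := hreach.exists_chain
  obtain ⟨f, hf⟩ : z + Pi.single e 1 ∈ LinearMap.range (coboundary dualEnds) := by
    refine mem_range_coboundary_of_orthogonal hconn hdual horth heuler fun g => ?_
    rw [dotProduct_add, hz, dotProduct_single_one, coboundary_of_ends huv,
      CharTwo.add_self_eq_zero]
  have hzero : ∀ e' ∈ Sᶜ, coboundary dualEnds f e' = 0 := by
    intro e' he'
    have hne : e' ≠ e := fun h => he' (h ▸ he)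
    simp [hf, hzS e' fun h => he' h.1, hne]
  have hone : coboundary dualEnds f e = 1 := by simp [hf, hzS e]
  induction hxy : dualEnds e with
  | h x y =>
    rw [coboundary_of_ends hxy, (hS x y).eq_of_coboundary_eq_zero hzero,
      CharTwo.add_self_eq_zero] at hone
    exact zero_ne_one hone

theorem edgeAcyclic_iff_edgeConn_compl [Finite V] [Finite F]
    (hconn : edgeConn ends Set.univ) (hdual : edgeConn dualEnds Set.univ)
    (horth : ∀ g f, coboundary ends g ⬝ᵥ coboundary dualEnds f = 0)
    (heuler : Nat.card V + Nat.card F = Nat.card E + 2) (S : Set E) :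
    edgeAcyclic ends S ↔ edgeConn dualEnds Sᶜ :=
  ⟨edgeConn_compl_of_edgeAcyclic hdual horth,
    edgeAcyclic_of_edgeConn_compl hconn hdual horth heuler⟩

end Duality

/-! ### Planar maps -/

/-- The opposite orientation of a dart; a dart is an edge with one of its two orientations. -/
def dartRev {E : Type} (d : E × Bool) : E × Bool := (d.1, !d.2)

/-- The endpoints of an edge, given the label `lab d` at which each dart `d` starts. -/
def dartEnds {V E : Type} (lab : E × Bool → V) (e : E) : Sym2 V :=
  s(lab (e, false), lab (e, true))

section Darts

variable {V E : Type}

@[simp] theorem dartRev_dartRev (d : E × Bool) : dartRev (dartRev d) = d := by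
  simp [dartRev]

@[simp] theorem dartRev_fst (d : E × Bool) : (dartRev d).1 = d.1 := rfl

theorem eq_or_eq_dartRev {d d' : E × Bool} (h : d.1 = d'.1) : d = d' ∨ d = dartRev d' := by
  rcases d with ⟨e, b⟩
  rcases d' with ⟨e', b'⟩
  obtain rfl : e = e' := h
  cases b <;> cases b' <;> simp [dartRev]

theorem dartEnds_fst (lab : E × Bool → V) (d : E × Bool) :
    dartEnds lab d.1 = s(lab d, lab (dartRev d)) := by
  rcases d with ⟨e, _ | _⟩
  · rfl
  · exact Sym2.eq_swap

theorem coboundary_dartEnds (lab : E × Bool → V) (g : V → ZMod 2) (e : E) :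
    coboundary (dartEnds lab) g e = g (lab (e, false)) + g (lab (e, true)) :=
  coboundary_of_ends rfl g

end Darts

/-- A rooted combinatorial planar map. The permutation `σ` turns a dart counterclockwise about its
start vertex `vert d`, `face d` is the face to the right of `d`, and planarity is Euler's
formula. -/
structure PlanarMap where
  V : Type
  F : Type
  E : Type
  [finV : Finite V]
  [finF : Finite F]
  [finE : Finite E]
  σ : Equiv.Perm (E × Bool)
  vert : E × Bool → V
  face : E × Bool → F
  vert_σ : ∀ d, vert (σ d) = vert d
  face_σ : ∀ d, face (σ d) = face (dartRev d)
  vert_surjective : Function.Surjective vert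
  face_surjective : Function.Surjective face
  root : E × Bool
  connected : ∀ O : Set (E × Bool), root ∈ O → Set.MapsTo σ O O → Set.MapsTo dartRev O O →
    ∀ d, d ∈ O
  euler : Nat.card V + Nat.card F = Nat.card E + 2

attribute [instance] PlanarMap.finV PlanarMap.finF PlanarMap.finE

namespace PlanarMap

variable (P : PlanarMap)

/-- The planar dual of a map, with the same darts. -/
def dual : PlanarMap where
  V := P.F
  F := P.V
  E := P.E
  σ := (Function.Involutive.toPerm dartRev dartRev_dartRev).trans P.σ
  vert := P.face
  face := P.vert
  vert_σ d := (P.face_σ (dartRev d)).trans (by rw [dartRev_dartRev])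
  face_σ d := P.vert_σ (dartRev d)
  vert_surjective := P.face_surjective
  face_surjective := P.vert_surjective
  root := P.root
  connected O hroot hσ hrev :=
    P.connected O hroot (fun d hd => dartRev_dartRev d ▸ hσ (hrev hd)) hrev
  euler := by rw [add_comm, P.euler]

theorem edgeConn_dartEnds_vert : edgeConn (dartEnds P.vert) Set.univ := by
  have hreach : ∀ d, P.vert d ∈ edgeComponent (dartEnds P.vert) Set.univ (P.vert P.root) := by
    refine P.connected {d | P.vert d ∈ edgeComponent _ _ _} (self_mem_edgeComponent _) ?_ ?_
    · intro d hd
      rwa [Set.mem_ofPred_eq, P.vert_σ]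
    · intro d hd
      exact (mem_edgeComponent_iff_of_ends (Set.mem_univ _) (dartEnds_fst P.vert d)).1 hd
  intro u v
  obtain ⟨d, rfl⟩ := P.vert_surjective u
  obtain ⟨d', rfl⟩ := P.vert_surjective v
  exact (hreach d).symm.trans (hreach d')

theorem coboundary_vert_dotProduct_coboundary_face [Fintype P.E] (g : P.V → ZMod 2)
    (f : P.F → ZMod 2) :
    coboundary (dartEnds P.vert) g ⬝ᵥ coboundary (dartEnds P.face) f = 0 := by
  have hturn : ∑ d, g (P.vert d) * f (P.face (dartRev d)) = ∑ d, g (P.vert d) * f (P.face d) := by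
    rw [← Equiv.sum_comp P.σ fun d => g (P.vert d) * f (P.face d)]
    simp only [P.vert_σ, P.face_σ]
  calc coboundary (dartEnds P.vert) g ⬝ᵥ coboundary (dartEnds P.face) f
      = ∑ d, g (P.vert d) * f (P.face (dartRev d)) + ∑ d, g (P.vert d) * f (P.face d) := by
        rw [Fintype.sum_prod_type, Fintype.sum_prod_type, ← Finset.sum_add_distrib]
        refine Finset.sum_congr rfl fun e _ => ?_
        simp only [coboundary_dartEnds, Fintype.sum_bool, dartRev, Bool.not_true,
          Bool.not_false]
        ring
    _ = 0 := by rw [hturn, CharTwo.add_self_eq_zero]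

theorem edgeAcyclic_iff_edgeConn_compl (S : Set P.E) :
    edgeAcyclic (dartEnds P.vert) S ↔ edgeConn (dartEnds P.face) Sᶜ := by
  have := Fintype.ofFinite P.E
  exact _root_.edgeAcyclic_iff_edgeConn_compl P.edgeConn_dartEnds_vert
    P.dual.edgeConn_dartEnds_vert P.coboundary_vert_dotProduct_coboundary_face P.euler S

/-- The plane graph underlying a planar map, paired with its dual. -/
def toPlaneDualPair : PlaneDualPair where
  V := P.V
  F := P.F
  E := P.E
  neV := ⟨P.vert P.root⟩
  neF := ⟨P.face P.root⟩
  ends := dartEnds P.vert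
  dualEnds := dartEnds P.face
  conn := P.edgeConn_dartEnds_vert
  dual_conn := P.dual.edgeConn_dartEnds_vert
  acyclic_iff_dual_conn := P.edgeAcyclic_iff_edgeConn_compl
  conn_iff_dual_acyclic S := by
    have h : edgeAcyclic (dartEnds P.face) Sᶜ ↔ edgeConn (dartEnds P.vert) Sᶜᶜ :=
      P.dual.edgeAcyclic_iff_edgeConn_compl Sᶜ
    rw [compl_compl] at h
    exact h.symm

end PlanarMap

/-! ### The contour of a tree sweeps the graph -/

/-- `c` is a contour of the edge set `T`: at every time it crosses the current edge if that edge
lies in `T`, and otherwise turns to another dart at the current label. -/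
structure IsContour {V E : Type} (lab : E × Bool → V) (T : Set E) (c : ℕ → E × Bool) : Prop where
  step_mem : ∀ t, (c t).1 ∈ T → lab (c (t + 1)) = lab (dartRev (c t))
  step_notMem : ∀ t, (c t).1 ∉ T → lab (c (t + 1)) = lab (c t)

/-- The darts visited by `c` before time `t`. -/
def visited {E : Type} (c : ℕ → E × Bool) (t : ℕ) : Set (E × Bool) :=
  c '' Set.Iio t

/-- The edges of which exactly one dart has been visited before time `t`. -/
def halfVisited {E : Type} (c : ℕ → E × Bool) (t : ℕ) : Set E :=
  Prod.fst '' {d | d ∈ visited c t ∧ dartRev d ∉ visited c t}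

namespace IsContour

variable {V E : Type} {lab : E × Bool → V} {T : Set E} {c : ℕ → E × Bool} {e : E}

theorem exists_crossing (hc : IsContour lab T c) {X : Set V}
    (hX : ∀ e' ∈ T \ {e}, ∀ x y, dartEnds lab e' = s(x, y) → x ∈ X → y ∈ X) {s t : ℕ}
    (hst : s ≤ t) (hs : lab (c s) ∈ X) (ht : lab (c t) ∉ X) :
    ∃ r ∈ Set.Ico s t, (c r).1 = e ∧ lab (c r) ∈ X := by
  induction t, hst using Nat.le_induction with
  | base => exact absurd hs ht
  | succ t hst ih =>
    by_cases htX : lab (c t) ∈ X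
    · refine ⟨t, ⟨hst, t.lt_succ_self⟩, ?_, htX⟩
      by_contra hne
      by_cases hT : (c t).1 ∈ T
      · rw [hc.step_mem t hT] at ht
        exact ht (hX _ ⟨hT, hne⟩ _ _ (dartEnds_fst lab _) htX)
      · rw [hc.step_notMem t hT] at ht
        exact ht htX
    · obtain ⟨r, hr, hre, hrX⟩ := ih htX
      exact ⟨r, ⟨hr.1, hr.2.trans t.lt_succ_self⟩, hre, hrX⟩

theorem exists_leaving_edgeComponent (hc : IsContour lab T c) {x : V} {s t : ℕ} (hst : s ≤ t)
    (hs : lab (c s) ∈ edgeComponent (dartEnds lab) (T \ {e}) x)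
    (ht : lab (c t) ∉ edgeComponent (dartEnds lab) (T \ {e}) x) :
    ∃ r ∈ Set.Ico s t, (c r).1 = e ∧ lab (c r) ∈ edgeComponent (dartEnds lab) (T \ {e}) x :=
  hc.exists_crossing (fun _ he' _ _ hxy => (mem_edgeComponent_iff_of_ends he' hxy).1) hst hs ht

theorem exists_entering_edgeComponent (hc : IsContour lab T c) {x : V} {s t : ℕ} (hst : s ≤ t)
    (hs : lab (c s) ∉ edgeComponent (dartEnds lab) (T \ {e}) x)
    (ht : lab (c t) ∈ edgeComponent (dartEnds lab) (T \ {e}) x) :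
    ∃ r ∈ Set.Ico s t, (c r).1 = e ∧ lab (c r) ∉ edgeComponent (dartEnds lab) (T \ {e}) x :=
  hc.exists_crossing (X := (edgeComponent (dartEnds lab) (T \ {e}) x)ᶜ)
    (fun _ he' _ _ hxy => (mem_edgeComponent_iff_of_ends he' hxy).not.1) hst hs (not_not_intro ht)

theorem exists_eq_dartRev (hc : IsContour lab T c) (hT : edgeAcyclic (dartEnds lab) T) {N : ℕ}
    (hN : 0 < N) (hper : ∀ t, c (t + N) = c t) {t : ℕ} (ht : (c t).1 ∈ T) :
    ∃ r, c r = dartRev (c t) := by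
  have hstart : lab (c t) ∉
      edgeComponent (dartEnds lab) (T \ {(c t).1}) (lab (dartRev (c t))) := fun h =>
    hT _ ht _ _ (dartEnds_fst lab _) (edgeReach.symm h)
  obtain ⟨r, -, hre, hr⟩ := hc.exists_leaving_edgeComponent (s := t + 1) (t := t + N) (by omega)
    (by rw [hc.step_mem t ht]; exact self_mem_edgeComponent _) (by rwa [hper])
  exact ⟨r, (eq_or_eq_dartRev hre).resolve_left fun h => hstart (h ▸ hr)⟩

theorem not_edgeReach_of_mem_halfVisited (hc : IsContour lab T c)
    (hT : edgeAcyclic (dartEnds lab) T) {t : ℕ} (he : e ∈ halfVisited c t) (heT : e ∈ T) :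
    ¬ edgeReach (dartEnds lab) (T \ {e}) (lab (c 0)) (lab (c t)) := by
  intro hreach
  obtain ⟨_, ⟨⟨s, hst, rfl⟩, hunvisited⟩, rfl⟩ := he
  set C := edgeComponent (dartEnds lab) (T \ {(c s).1}) (lab (c 0))
  have hC : lab (c s) ∈ C → lab (dartRev (c s)) ∉ C := fun h h' =>
    hT _ heT _ _ (dartEnds_fst lab _) (h.symm.trans h')
  by_cases hs : lab (c s) ∈ C
  · obtain ⟨r, hr, hre, hrC⟩ := hc.exists_entering_edgeComponent (Nat.succ_le_of_lt hst)
      (by rw [hc.step_mem s heT]; exact hC hs) hreach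
    have hback := (eq_or_eq_dartRev hre).resolve_left fun h => hrC (by rwa [h])
    exact hunvisited ⟨r, hr.2, hback⟩
  · obtain ⟨r, hr, hre, hrC⟩ := hc.exists_leaving_edgeComponent s.zero_le
      (self_mem_edgeComponent _) hs
    have hback := (eq_or_eq_dartRev hre).resolve_left fun h => hs (by rwa [← h])
    exact hunvisited ⟨r, hr.2.trans hst, hback⟩

theorem exists_first_arrival (hc : IsContour lab T c) {u : V} (hstart : lab (c 0) ≠ u) {t : ℕ}
    (ht : lab (c t) = u) :
    ∃ r < t, (c r).1 ∈ T ∧ lab (dartRev (c r)) = u ∧ ∀ q ≤ r, lab (c q) ≠ u := by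
  classical
  have hexists : ∃ r, lab (c r) = u := ⟨t, ht⟩
  have hpos : Nat.find hexists ≠ 0 := fun h => hstart (h ▸ Nat.find_spec hexists)
  obtain ⟨r, hr⟩ := Nat.exists_eq_succ_of_ne_zero hpos
  have hfirst : ∀ q ≤ r, lab (c q) ≠ u := fun q hq => Nat.find_min hexists (by omega)
  have harrive : lab (c r.succ) = u := hr ▸ Nat.find_spec hexists
  have hrT : (c r).1 ∈ T := by
    by_contra hrT
    exact hfirst r le_rfl (hc.step_notMem r hrT ▸ harrive)
  have hrt : r.succ ≤ t := hr ▸ Nat.find_min' hexists ht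
  exact ⟨r, hrt, hrT, (hc.step_mem r hrT).symm.trans harrive, hfirst⟩

/-- The contour cannot return over the edge by which it first reached a label before it has visited
every dart at that label. -/
theorem exists_mem_halfVisited (hc : IsContour lab T c) (hT : edgeAcyclic (dartEnds lab) T)
    {s t : ℕ} (hinj : Set.InjOn c (Set.Iic s)) (hts : t ≤ s) (hstart : lab (c s) ≠ lab (c 0))
    (hvisited : lab (c s) ∈ lab '' visited c t) :
    ∃ e ∈ halfVisited c t, lab (c s) ∈ dartEnds lab e := by
  obtain ⟨_, ⟨t₁, ht₁ : t₁ < t, rfl⟩, ht₁s⟩ := hvisited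
  obtain ⟨r, hrt, hrT, hrev, hfirst⟩ := hc.exists_first_arrival hstart.symm ht₁s
  refine ⟨(c r).1, ⟨c r, ⟨⟨r, hrt.trans ht₁, rfl⟩, ?_⟩, rfl⟩, ?_⟩
  · rintro ⟨q, hqt : q < t, hq⟩
    have hrq : r < q := by
      by_contra! h
      exact hfirst q h (hq ▸ hrev)
    have hback : lab (c (q + 1)) = lab (c r) := by
      rw [hc.step_mem q (by rwa [hq]), hq, dartRev_dartRev]
    have hne : lab (c r) ∉ edgeComponent (dartEnds lab) (T \ {(c r).1}) (lab (c s)) := fun h =>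
      hT _ hrT _ _ ((dartEnds_fst lab _).trans (by rw [hrev])) (edgeReach.symm h)
    obtain ⟨p, hp, hpe, hpC⟩ := hc.exists_entering_edgeComponent (s := q + 1) (by omega)
      (hback ▸ hne) (self_mem_edgeComponent (lab (c s)))
    have hpr : c p = c r := (eq_or_eq_dartRev hpe).resolve_right fun h =>
      hpC (by rw [h, hrev]; exact self_mem_edgeComponent _)
    have hp_eq : p = r := hinj hp.2.le (by simp only [Set.mem_Iic]; omega) hpr
    exact absurd hp.1 (by omega)
  · rw [dartEnds_fst, hrev]
    exact Sym2.mem_mk_right _ _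

end IsContour

section Counting

variable {V E : Type} {ends : E → Sym2 V}

theorem ncard_biUnion_le_mul {ι α : Type} {s : Set ι} (hs : s.Finite) {f : ι → Set α} {n : ℕ}
    (hf : ∀ i ∈ s, (f i).ncard ≤ n) : (⋃ i ∈ s, f i).ncard ≤ s.ncard * n := by
  rw [Set.ncard_eq_toFinset_card s hs]
  calc (⋃ i ∈ s, f i).ncard = (⋃ i ∈ hs.toFinset, f i).ncard := by
        simp only [Set.Finite.mem_toFinset]
    _ ≤ ∑ i ∈ hs.toFinset, (f i).ncard := Finset.set_ncard_biUnion_le _ _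
    _ ≤ hs.toFinset.card * n := Finset.sum_le_card_nsmul _ _ _ fun i hi => hf i (by simpa using hi)

theorem ncard_setOf_mem_sym2_le (z : Sym2 V) : {v | v ∈ z}.ncard ≤ 2 := by
  induction z with
  | h x y =>
    have : {v | v ∈ s(x, y)} = {x, y} := Set.ext fun v => Sym2.mem_iff
    rw [this]
    exact (Set.ncard_insert_le x {y}).trans (by rw [Set.ncard_singleton])

theorem ncard_union_biUnion_incident_le [Finite V] {Δ : ℕ} (hdeg : ∀ v, vertDegree ends v ≤ Δ)
    (H : Set E) (hH : H.Finite) (x : V) :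
    (H ∪ ⋃ v ∈ insert x (⋃ e ∈ H, {v | v ∈ ends e}), {e | v ∈ ends e}).ncard ≤
      (2 * Δ + 1) * H.ncard + Δ := by
  have hends : (insert x (⋃ e ∈ H, {v | v ∈ ends e})).ncard ≤ H.ncard * 2 + 1 :=
    (Set.ncard_insert_le _ _).trans (Nat.succ_le_succ
      (ncard_biUnion_le_mul hH fun e _ => ncard_setOf_mem_sym2_le (ends e)))
  calc _ ≤ H.ncard + (insert x (⋃ e ∈ H, {v | v ∈ ends e})).ncard * Δ :=
        (Set.ncard_union_le _ _).trans (Nat.add_le_add_left (ncard_biUnion_le_mul (Set.toFinite _)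
          fun v _ => (Nat.le_add_right _ _).trans (hdeg v)) _)
    _ ≤ H.ncard + (H.ncard * 2 + 1) * Δ := by gcongr
    _ = (2 * Δ + 1) * H.ncard + Δ := by ring

end Counting

namespace PlanarMap

variable (P : PlanarMap) {T : Set P.E}

open Classical in
/-- One step of the walk around the tree `T`: cross the current edge if it lies in `T`, then turn
to the next dart. -/
noncomputable def contourStep (T : Set P.E) (d : P.E × Bool) : P.E × Bool :=
  P.σ (if d.1 ∈ T then dartRev d else d)

/-- The walk around `T` that starts at the root. -/
noncomputable def contour (T : Set P.E) (t : ℕ) : P.E × Bool :=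
  (P.contourStep T)^[t] P.root

/-- The time after which the walk around `T` is back at the root. -/
noncomputable def contourPeriod (T : Set P.E) : ℕ :=
  Function.minimalPeriod (P.contourStep T) P.root

theorem contourStep_injective (T : Set P.E) : Function.Injective (P.contourStep T) := by
  intro d d' h
  have h := P.σ.injective h
  have hfst : d.1 = d'.1 := by
    have := congrArg Prod.fst h
    split_ifs at this <;> exact this
  rw [hfst] at h
  split_ifs at h
  · rw [← dartRev_dartRev d, h, dartRev_dartRev]
  · exact h

theorem contourPeriod_pos (T : Set P.E) : 0 < P.contourPeriod T :=
  Function.minimalPeriod_pos_of_mem_periodicPts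
    ((P.contourStep_injective T).mem_periodicPts P.root)

theorem contour_add_contourPeriod (T : Set P.E) (t : ℕ) :
    P.contour T (t + P.contourPeriod T) = P.contour T t := by
  rw [contour, Function.iterate_add_apply, contourPeriod, Function.iterate_minimalPeriod, contour]

theorem contour_injOn (T : Set P.E) : Set.InjOn (P.contour T) (Set.Iio (P.contourPeriod T)) :=
  Function.iterate_injOn_Iio_minimalPeriod

theorem contour_succ (T : Set P.E) (t : ℕ) :
    P.contour T (t + 1) = P.contourStep T (P.contour T t) :=
  Function.iterate_succ_apply' _ _ _

theorem dual_contourStep_compl (T : Set P.E) (d : P.E × Bool) :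
    P.dual.contourStep Tᶜ d = P.contourStep T d := by
  by_cases hd : d.1 ∈ T
  · exact congrArg P.σ ((congrArg dartRev (if_neg (not_not_intro hd))).trans (if_pos hd).symm)
  · exact congrArg P.σ ((congrArg dartRev (if_pos hd)).trans
      ((dartRev_dartRev d).trans (if_neg hd).symm))

theorem dual_contour_compl (T : Set P.E) : P.dual.contour Tᶜ = P.contour T :=
  funext fun t => congrArg (fun f => f^[t] P.root) (funext (P.dual_contourStep_compl T))

theorem isContour_vert (T : Set P.E) : IsContour P.vert T (P.contour T) where
  step_mem t ht := by rw [contour_succ, contourStep, if_pos ht, P.vert_σ]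
  step_notMem t ht := by rw [contour_succ, contourStep, if_neg ht, P.vert_σ]

theorem isContour_face (T : Set P.E) : IsContour P.face Tᶜ (P.contour T) :=
  P.dual_contour_compl T ▸ P.dual.isContour_vert Tᶜ

variable {P}

theorem isSpanningTree_face_compl (hT : IsSpanningTree (dartEnds P.vert) T) :
    IsSpanningTree (dartEnds P.face) Tᶜ :=
  ⟨(P.toPlaneDualPair.acyclic_iff_dual_conn T).1 hT.2,
    (P.toPlaneDualPair.conn_iff_dual_acyclic T).1 hT.1⟩

theorem dartRev_contour_mem_range (hT : IsSpanningTree (dartEnds P.vert) T) (t : ℕ) :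
    dartRev (P.contour T t) ∈ Set.range (P.contour T) := by
  by_cases ht : (P.contour T t).1 ∈ T
  · exact (P.isContour_vert T).exists_eq_dartRev hT.2 (P.contourPeriod_pos T)
      (P.contour_add_contourPeriod T) ht
  · exact (P.isContour_face T).exists_eq_dartRev (isSpanningTree_face_compl hT).2
      (P.contourPeriod_pos T) (P.contour_add_contourPeriod T) ht

theorem contour_surjective (hT : IsSpanningTree (dartEnds P.vert) T) :
    Function.Surjective (P.contour T) := by
  refine P.connected (Set.range (P.contour T)) ⟨0, rfl⟩ ?_ ?_
  · rintro _ ⟨t, rfl⟩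
    by_cases ht : (P.contour T t).1 ∈ T
    · obtain ⟨s, hs⟩ := dartRev_contour_mem_range hT t
      refine ⟨s + 1, ?_⟩
      rw [contour_succ, hs, contourStep, dartRev_fst, if_pos ht, dartRev_dartRev]
    · exact ⟨t + 1, by rw [contour_succ, contourStep, if_neg ht]⟩
  · rintro _ ⟨t, rfl⟩
    exact dartRev_contour_mem_range hT t

theorem exists_lt_contourPeriod_contour_eq (hT : IsSpanningTree (dartEnds P.vert) T)
    (d : P.E × Bool) : ∃ s < P.contourPeriod T, P.contour T s = d := by
  obtain ⟨t, rfl⟩ := contour_surjective hT d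
  exact ⟨t % P.contourPeriod T, Nat.mod_lt _ (P.contourPeriod_pos T),
    Function.iterate_mod_minimalPeriod_eq⟩

theorem isSweep_visited_contour (hT : IsSpanningTree (dartEnds P.vert) T) :
    IsSweep (visited (P.contour T)) Set.univ where
  mono _ _ hst := Set.image_mono (Set.Iio_subset_Iio hst)
  zero := by simp [visited]
  exists_subset := ⟨P.contourPeriod T, fun d _ => exists_lt_contourPeriod_contour_eq hT d⟩
  step t := ⟨P.contour T t, by
    rw [visited, visited, ← Set.image_insert_eq, Set.Iio_insert, Set.Iio_add_one_eq_Iic]⟩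

theorem ncard_halfVisited_contour_le (hT : IsSpanningTree (dartEnds P.vert) T) (t : ℕ) :
    (halfVisited (P.contour T) t).ncard ≤
      edgeDiam (dartEnds P.vert) T + edgeDiam (dartEnds P.face) Tᶜ := by
  have hT' := isSpanningTree_face_compl hT
  set H := halfVisited (P.contour T) t
  calc H.ncard = (H ∩ T ∪ H ∩ Tᶜ).ncard := by rw [Set.inter_union_compl]
    _ ≤ (H ∩ T).ncard + (H ∩ Tᶜ).ncard := Set.ncard_union_le _ _
    _ ≤ edgeDiam (dartEnds P.vert) T + edgeDiam (dartEnds P.face) Tᶜ := Nat.add_le_add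
      (ncard_separating_le_edgeDiam hT.1 _ _ fun e he =>
        (P.isContour_vert T).not_edgeReach_of_mem_halfVisited hT.2 he.1 he.2)
      (ncard_separating_le_edgeDiam hT'.1 _ _ fun e he =>
        (P.isContour_face T).not_edgeReach_of_mem_halfVisited hT'.2 he.1 he.2)

theorem edgeBoundary_visited_contour_subset (hT : IsSpanningTree (dartEnds P.vert) T) (t : ℕ) :
    edgeBoundary (dartEnds P.vert) (P.vert '' visited (P.contour T) t) ⊆
      halfVisited (P.contour T) t ∪
        ⋃ v ∈ insert (P.vert (P.contour T 0))
          (⋃ e ∈ halfVisited (P.contour T) t, {v | v ∈ dartEnds P.vert e}),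
          {e | v ∈ dartEnds P.vert e} := by
  rintro e ⟨x, y, hxy, hx, hy⟩
  obtain ⟨d, rfl, rfl, rfl⟩ : ∃ d, d.1 = e ∧ P.vert d = x ∧ P.vert (dartRev d) = y := by
    rcases Sym2.eq_iff.1 hxy with ⟨hx, hy⟩ | ⟨hy, hx⟩
    · exact ⟨(e, false), rfl, hx, hy⟩
    · exact ⟨(e, true), rfl, hx, hy⟩
  by_cases hd : d ∈ visited (P.contour T) t
  · exact Or.inl ⟨d, ⟨hd, fun h => hy ⟨_, h, rfl⟩⟩, rfl⟩
  refine Or.inr (Set.mem_biUnion (x := P.vert d) ?_ (by simp [hxy]))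
  by_cases hstart : P.vert d = P.vert (P.contour T 0)
  · exact Or.inl hstart
  obtain ⟨s, hs, rfl⟩ := exists_lt_contourPeriod_contour_eq hT d
  have hts : t ≤ s := by
    by_contra! h
    exact hd ⟨s, h, rfl⟩
  have hinj := (P.contour_injOn T).mono (Set.Iic_subset_Iio.2 hs)
  obtain ⟨e', he', hmem⟩ :=
    (P.isContour_vert T).exists_mem_halfVisited hT.2 hinj hts hstart hx
  exact Or.inr (Set.mem_biUnion he' hmem)

theorem exists_isSweep_ncard_edgeBoundary_le {Δ : ℕ}
    (hdeg : ∀ v, vertDegree (dartEnds P.vert) v ≤ Δ) (hT : IsSpanningTree (dartEnds P.vert) T) :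
    ∃ A, IsSweep A Set.univ ∧ ∀ t, (edgeBoundary (dartEnds P.vert) (A t)).ncard ≤
      (2 * Δ + 1) * (edgeDiam (dartEnds P.vert) T + edgeDiam (dartEnds P.face) Tᶜ) + Δ := by
  refine ⟨fun t => P.vert '' visited (P.contour T) t, ?_, fun t => ?_⟩
  · have hsweep := (isSweep_visited_contour hT).image P.vert
    rwa [Set.image_univ, P.vert_surjective.range_eq] at hsweep
  · calc _ ≤ _ := Set.ncard_le_ncard (edgeBoundary_visited_contour_subset hT t)
      _ ≤ _ := ncard_union_biUnion_incident_le hdeg _ (Set.toFinite _) _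
      _ ≤ _ := by gcongr; exact ncard_halfVisited_contour_le hT t

end PlanarMap

/-! ### Noncrossing matchings -/

/-- A noncrossing perfect matching of the points `0, …, size - 1` on a line: `arc d e` matches the
first point, encloses `d`, and is followed by `e`. -/
inductive NoncrossingMatching
  | nil
  | arc (inner rest : NoncrossingMatching)

namespace NoncrossingMatching

/-- The number of matched points. -/
def size : NoncrossingMatching → ℕ
  | nil => 0
  | arc d e => d.size + e.size + 2

/-- The point matched with `i`; points beyond `size` are fixed. -/
def partner : NoncrossingMatching → ℕ → ℕ
  | nil, i => i
  | arc d e, i =>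
    if i = 0 then d.size + 1
    else if i ≤ d.size then d.partner (i - 1) + 1
    else if i = d.size + 1 then 0
    else e.partner (i - (d.size + 2)) + (d.size + 2)

/-- The region of the upper half plane, cut along the arcs, that contains the gap before point `g`:
`0` for the unbounded region, and `j + 1` for the one just below the arc opened at `j`. -/
def region : NoncrossingMatching → ℕ → ℕ
  | nil, _ => 0
  | arc d e, g =>
    if g = 0 then 0
    else if g ≤ d.size + 1 then d.region (g - 1) + 1
    else if e.region (g - (d.size + 2)) = 0 then 0
    else e.region (g - (d.size + 2)) + (d.size + 2)

/-- The number of gaps to the left of the gap `g` in its region. -/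
def rank : NoncrossingMatching → ℕ → ℕ
  | nil, _ => 0
  | arc d e, g =>
    if g = 0 then 0
    else if g ≤ d.size + 1 then d.rank (g - 1)
    else if e.region (g - (d.size + 2)) = 0 then e.rank (g - (d.size + 2)) + 1
    else e.rank (g - (d.size + 2))

/-- The number of outermost arcs. -/
def width : NoncrossingMatching → ℕ
  | nil => 0
  | arc _ e => e.width + 1

/-- The largest number of arcs bounding a region from below. -/
def maxWidth : NoncrossingMatching → ℕ
  | nil => 0
  | arc d e => max (e.width + 1) (max d.maxWidth e.maxWidth)

variable (d : NoncrossingMatching)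

theorem partner_lt {i : ℕ} (hi : i < d.size) : d.partner i < d.size := by
  induction d generalizing i with
  | nil => exact hi
  | arc d e ihd ihe =>
    have := @ihd (i - 1)
    have := @ihe (i - (d.size + 2))
    simp only [size, partner] at *
    split_ifs <;> omega

theorem partner_partner (i : ℕ) : d.partner (d.partner i) = i := by
  induction d generalizing i with
  | nil => rfl
  | arc d e ihd ihe =>
    have := ihd (i - 1)
    have := d.partner_lt (i := i - 1)
    have := ihe (i - (d.size + 2))
    simp only [partner]
    split_ifs <;> simp_all <;> omega

theorem partner_ne {i : ℕ} (hi : i < d.size) : d.partner i ≠ i := by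
  induction d generalizing i with
  | nil => exact absurd hi (Nat.not_lt_zero _)
  | arc d e ihd ihe =>
    have := @ihd (i - 1)
    have := @ihe (i - (d.size + 2))
    simp only [size, partner] at *
    split_ifs <;> omega

theorem region_zero : d.region 0 = 0 := by
  cases d <;> rfl

theorem region_size : d.region d.size = 0 := by
  induction d with
  | nil => rfl
  | arc d e _ ihe =>
    have hsub : d.size + e.size + 2 - (d.size + 2) = e.size := by omega
    simp [region, size, hsub, ihe]

theorem partner_arc_inner (e : NoncrossingMatching) {i : ℕ} (hi : i < d.size) :
    (arc d e).partner (i + 1) = d.partner i + 1 := by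
  simp [partner, Nat.succ_le_of_lt hi]

theorem partner_arc_rest (e : NoncrossingMatching) (i : ℕ) :
    (arc d e).partner (i + (d.size + 2)) = e.partner i + (d.size + 2) := by
  rw [partner, if_neg (by omega), if_neg (by omega), if_neg (by omega), Nat.add_sub_cancel]

theorem region_arc_inner (e : NoncrossingMatching) {g : ℕ} (hg : g ≤ d.size) :
    (arc d e).region (g + 1) = d.region g + 1 := by
  simp [region, hg]

theorem region_arc_rest (e : NoncrossingMatching) (g : ℕ) :
    (arc d e).region (g + (d.size + 2)) =
      if e.region g = 0 then 0 else e.region g + (d.size + 2) := by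
  rw [region, if_neg (by omega), if_neg (by omega), Nat.add_sub_cancel]

theorem arc_point_cases (i : ℕ) :
    i = 0 ∨ (∃ j < d.size, i = j + 1) ∨ i = d.size + 1 ∨ ∃ j, i = j + (d.size + 2) := by
  rcases Nat.eq_zero_or_pos i with h | h
  · exact .inl h
  · rcases lt_trichotomy i (d.size + 1) with h' | h' | h'
    · exact .inr (.inl ⟨i - 1, by omega, by omega⟩)
    · exact .inr (.inr (.inl h'))
    · exact .inr (.inr (.inr ⟨i - (d.size + 2), by omega⟩))

theorem region_succ_eq_region_partner {i : ℕ} (hi : i < d.size) :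
    d.region (i + 1) = d.region (d.partner i) := by
  induction d generalizing i with
  | nil => exact absurd hi (Nat.not_lt_zero _)
  | arc d e ihd ihe =>
    rcases d.arc_point_cases i with rfl | ⟨j, hj, rfl⟩ | rfl | ⟨j, rfl⟩
    · simp [region, partner, region_zero, region_size]
    · rw [d.partner_arc_inner e hj, d.region_arc_inner e hj, ihd hj,
        d.region_arc_inner e (d.partner_lt hj).le]
    · simp [region, partner, region_zero]
    · rw [d.partner_arc_rest, Nat.add_right_comm, d.region_arc_rest, d.region_arc_rest,
        ihe (by simp only [size] at hi; omega)]

theorem region_succ_of_lt_partner {i : ℕ} (h : i < d.partner i) : d.region (i + 1) = i + 1 := by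
  induction d generalizing i with
  | nil => exact absurd h (lt_irrefl _)
  | arc d e ihd ihe =>
    rcases d.arc_point_cases i with rfl | ⟨j, hj, rfl⟩ | rfl | ⟨j, rfl⟩
    · simp [region, region_zero]
    · rw [d.partner_arc_inner e hj] at h
      rw [d.region_arc_inner e hj, ihd (Nat.lt_of_add_lt_add_right h)]
    · simp [partner] at h
    · rw [d.partner_arc_rest] at h
      rw [Nat.add_right_comm, d.region_arc_rest, ihe (Nat.lt_of_add_lt_add_right h),
        if_neg (Nat.succ_ne_zero j), Nat.add_right_comm]

theorem lt_size_of_lt_partner {j : ℕ} (h : j < d.partner j) : j < d.size := by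
  induction d generalizing j with
  | nil => exact absurd h (lt_irrefl _)
  | arc d e _ ihe =>
    have := @ihe (j - (d.size + 2))
    simp only [size, partner] at *
    split_ifs at h <;> omega

theorem lt_partner_of_region_eq_succ {g j : ℕ} (h : d.region g = j + 1) : j < d.partner j := by
  induction d generalizing g j with
  | nil => cases h
  | arc d e ihd ihe =>
    simp only [region] at h
    split_ifs at h with _ _ hrest
    · rcases j with _ | j
      · simp [partner]
      · have hj := ihd (Nat.succ_injective h)
        rw [d.partner_arc_inner e (d.lt_size_of_lt_partner hj)]
        exact Nat.succ_lt_succ hj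
    · obtain ⟨i, hi⟩ := Nat.exists_eq_succ_of_ne_zero hrest
      obtain rfl : j = i + (d.size + 2) := by omega
      rw [d.partner_arc_rest]
      exact Nat.add_lt_add_right (ihe hi) _

theorem region_le (g : ℕ) : d.region g ≤ d.size := by
  rcases h : d.region g with _ | j
  · exact Nat.zero_le _
  · exact d.lt_size_of_lt_partner (d.lt_partner_of_region_eq_succ h)

theorem rank_le_width {g : ℕ} (h : d.region g = 0) : d.rank g ≤ d.width := by
  induction d generalizing g with
  | nil => exact le_rfl
  | arc d e _ ihe =>
    have := @ihe (g - (d.size + 2))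
    simp only [region, rank, width] at *
    split_ifs at * <;> omega

theorem rank_le_maxWidth (g : ℕ) : d.rank g ≤ d.maxWidth := by
  induction d generalizing g with
  | nil => exact le_rfl
  | arc d e ihd ihe =>
    have := ihd (g - 1)
    have := ihe (g - (d.size + 2))
    have := @rank_le_width e (g - (d.size + 2))
    simp only [rank, maxWidth]
    split_ifs <;> omega

theorem eq_of_region_eq_of_rank_eq {g g' : ℕ} (hg : g ≤ d.size) (hg' : g' ≤ d.size)
    (hregion : d.region g = d.region g') (hrank : d.rank g = d.rank g') : g = g' := by
  induction d generalizing g g' with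
  | nil => exact (Nat.le_zero.1 hg).trans (Nat.le_zero.1 hg').symm
  | arc d e ihd ihe =>
    have := @ihd (g - 1) (g' - 1)
    have := @ihe (g - (d.size + 2)) (g' - (d.size + 2))
    have := d.region_le (g - 1)
    have := d.region_le (g' - 1)
    simp only [region, rank, size] at *
    split_ifs at * <;> omega

/-- `d` nested below `h` parallel arcs. -/
def stalk (d : NoncrossingMatching) : ℕ → NoncrossingMatching
  | 0 => d
  | h + 1 => arc (d.stalk h) nil

/-- The ternary tree of depth `k` whose edges are stalks of `h` parallel arcs. Two of the three
subtrees share an additional arc so that no region is bounded by more than three arcs. -/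
def ternaryTree (h : ℕ) : ℕ → NoncrossingMatching
  | 0 => nil.stalk h
  | k + 1 =>
    let branch := (ternaryTree h k).stalk h
    arc branch (arc (arc branch (arc branch nil)) nil)

theorem size_stalk (h : ℕ) : (d.stalk h).size = d.size + 2 * h := by
  induction h with
  | zero => rfl
  | succ h ih => simp only [stalk, size, ih]; ring

theorem maxWidth_stalk_le (h : ℕ) : (d.stalk h).maxWidth ≤ max 1 d.maxWidth := by
  induction h with
  | zero => exact le_max_right _ _
  | succ h ih => simp only [stalk, maxWidth, width]; omega

theorem maxWidth_ternaryTree_le (h k : ℕ) : (ternaryTree h k).maxWidth ≤ 2 := by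
  induction k with
  | zero => exact (maxWidth_stalk_le nil h).trans (by simp [maxWidth])
  | succ k ih =>
    have hbranch := (maxWidth_stalk_le (ternaryTree h k) h).trans (max_le one_le_two ih)
    simp only [ternaryTree, maxWidth, width]
    omega

theorem size_ternaryTree_succ (h k : ℕ) :
    (ternaryTree h (k + 1)).size = 3 * (ternaryTree h k).size + 6 * h + 8 := by
  simp only [ternaryTree, size, size_stalk]; ring

theorem size_ternaryTree (h k : ℕ) :
    (ternaryTree h k).size + 3 * h + 4 = 3 ^ k * (5 * h + 4) := by
  induction k with
  | zero => simp only [ternaryTree, size_stalk, size]; ring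
  | succ k ih => rw [size_ternaryTree_succ, pow_succ]; linarith

/-- `m` restricts to a translate of the matching `d` on the interval starting at `a`. -/
def OccursAt (d : NoncrossingMatching) (m : ℕ → ℕ) (a : ℕ) : Prop :=
  ∀ i < d.size, m (a + i) = a + d.partner i

namespace OccursAt

variable {m : ℕ → ℕ} {a : ℕ} {d e : NoncrossingMatching}

theorem head (H : (arc d e).OccursAt m a) : m a = a + (d.size + 1) :=
  H 0 (by simp only [size]; omega)

theorem inner (H : (arc d e).OccursAt m a) : d.OccursAt m (a + 1) := fun i hi => by
  rw [add_assoc, add_comm 1, H (i + 1) (by simp only [size]; omega), partner_arc_inner d e hi,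
    add_assoc, add_comm 1]

theorem rest (H : (arc d e).OccursAt m a) : e.OccursAt m (a + (d.size + 2)) := fun i hi => by
  rw [add_assoc, add_comm (d.size + 2), H (i + (d.size + 2)) (by simp only [size]; omega),
    partner_arc_rest d e i, add_assoc, add_comm (d.size + 2)]

theorem of_stalk {h : ℕ} (H : (d.stalk h).OccursAt m a) : d.OccursAt m (a + h) := by
  induction h generalizing a with
  | zero => exact H
  | succ h ih => rw [add_comm h, ← add_assoc]; exact ih H.inner

theorem apply_stalk {h : ℕ} (H : (d.stalk h).OccursAt m a) {i : ℕ} (hi : i < h) :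
    m (a + i) = a + (2 * h + d.size - 1 - i) := by
  induction h generalizing a i with
  | zero => exact absurd hi (Nat.not_lt_zero i)
  | succ h ih =>
    rcases i with _ | i
    · rw [add_zero, H.head, size_stalk]; omega
    · rw [← add_assoc, add_right_comm, ih H.inner (Nat.lt_of_succ_lt_succ hi)]; omega

end OccursAt

end NoncrossingMatching

/-! ### Sweeps of a ternary tree of chords cut many edges -/

theorem mem_iff_mem_of_notMem_edgeBoundary {V E : Type} {ends : E → Sym2 V} {A : Set V} {e : E}
    {x y : V} (he : ends e = s(x, y)) (hA : e ∉ edgeBoundary ends A) : x ∈ A ↔ y ∈ A :=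
  ⟨fun hx => by_contra fun hy => hA ⟨x, y, he, hx, hy⟩,
    fun hy => by_contra fun hx => hA ⟨y, x, he.trans Sym2.eq_swap, hy, hx⟩⟩

theorem exists_disjoint_of_encard_lt {α : Type} {B : Set α} {h : ℕ} {family : ℕ → Set α}
    (hfamily : (Set.Iio h).PairwiseDisjoint family) (hB : B.encard < h) :
    ∃ i < h, Disjoint (family i) B := by
  by_contra! hmeets
  choose f hfamily_mem hB_mem using fun i : Fin h => Set.not_disjoint_iff.1 (hmeets i i.2)
  have hf : Function.Injective f := fun i j hij =>
    Fin.ext (hfamily.elim i.2 j.2 (Set.not_disjoint_iff.2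
      ⟨f i, hfamily_mem i, hij ▸ hfamily_mem j⟩))
  refine hB.not_ge ?_
  calc (h : ℕ∞) = ENat.card (Fin h) := by simp
    _ ≤ (Set.range f).encard := hf.encard_range
    _ ≤ B.encard := Set.encard_le_encard (Set.range_subset_iff.2 hB_mem)

theorem iff_of_forall_iff_succ {Q : ℕ → Prop} {p q i j : ℕ}
    (hQ : ∀ k, p ≤ k → k + 1 < q → (Q k ↔ Q (k + 1))) (hi : i ∈ Set.Ico p q)
    (hj : j ∈ Set.Ico p q) : Q i ↔ Q j := by
  have hbase (k : ℕ) (hpk : p ≤ k) : k < q → (Q p ↔ Q k) := by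
    induction k, hpk using Nat.le_induction with
    | base => exact fun _ => Iff.rfl
    | succ k hk ih => exact fun hkq => (ih (by omega)).trans (hQ k hk hkq)
  exact (hbase i hi.1 hi.2).symm.trans (hbase j hj.1 hj.2)

theorem exists_lt_and_lt_of_injective {s : Fin 3 → ℕ} (hs : Function.Injective s) :
    ∃ i j k, s i < s j ∧ s j < s k := by
  have h01 := hs.ne (show (0 : Fin 3) ≠ 1 by decide)
  have h02 := hs.ne (show (0 : Fin 3) ≠ 2 by decide)
  have h12 := hs.ne (show (1 : Fin 3) ≠ 2 by decide)
  by_contra! hmedian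
  have := hmedian 0 1 2
  have := hmedian 0 2 1
  have := hmedian 1 0 2
  have := hmedian 1 2 0
  have := hmedian 2 0 1
  have := hmedian 2 1 0
  omega

/-- The edges of a half-infinite grid with points `(level, column)` and chords between columns of
level `0`: `ring l i` joins `(l, i)` to the next column, `up l i` joins it to the next level, and
`chord i` is the chord at column `i`. -/
inductive GridEdge
  | ring (l i : ℕ)
  | up (l i : ℕ)
  | chord (i : ℕ)
  deriving DecidableEq

namespace GridEdge

/-- The ends of a grid edge when the chords match the columns by `m`. -/
def ends (m : ℕ → ℕ) : GridEdge → Sym2 (ℕ × ℕ)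
  | ring l i => s((l, i), (l, i + 1))
  | up l i => s((l, i), (l + 1, i))
  | chord i => s((0, i), (0, m i))

/-- The edges with both ends in the columns `p, …, q - 1` and below level `h`, each chord being
represented by its left end. -/
def box (m : ℕ → ℕ) (h p q : ℕ) : Set GridEdge :=
  {e | match e with
    | ring l i => l < h ∧ p ≤ i ∧ i + 1 < q
    | up l i => l + 1 < h ∧ p ≤ i ∧ i < q
    | chord i => i < m i ∧ p ≤ i ∧ m i < q}

/-- The path made of the columns `u` and `v` below level `h` and the chord at `u`. -/
def line (h u v : ℕ) : Set GridEdge :=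
  {e | e = chord u ∨ ∃ l, l + 1 < h ∧ (e = up l u ∨ e = up l v)}

theorem box_mono {m : ℕ → ℕ} {h p q p' q' : ℕ} (hp : p ≤ p') (hq : q' ≤ q) :
    box m h p' q' ⊆ box m h p q := by
  rintro (⟨l, i⟩ | ⟨l, i⟩ | i) ⟨h₁, h₂, h₃⟩ <;> exact ⟨h₁, by omega, by omega⟩

theorem line_subset_box_diff {m : ℕ → ℕ} {h a b p q u v : ℕ} (hap : a ≤ p) (hpq : p ≤ q)
    (hqb : q ≤ b) (huv : u < v) (hm : m u = v) (hu : u ∈ Set.Ico a p ∪ Set.Ico q b)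
    (hv : v ∈ Set.Ico a p ∪ Set.Ico q b) : line h u v ⊆ box m h a b \ box m h p q := by
  simp only [Set.mem_union, Set.mem_Ico] at hu hv
  rintro _ (rfl | ⟨l, hl, rfl | rfl⟩) <;>
    refine ⟨⟨by omega, by omega, by omega⟩, fun hbox => ?_⟩ <;>
    have := hbox.2 <;> omega

theorem iff_of_disjoint_line {m : ℕ → ℕ} {A : Set (ℕ × ℕ)} {h u v l : ℕ} (hm : m u = v)
    (hline : Disjoint (line h u v) (edgeBoundary (ends m) A)) (hl : l < h) :
    ((l, u) ∈ A ↔ (0, u) ∈ A) ∧ ((l, v) ∈ A ↔ (0, u) ∈ A) := by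
  have hcolumn (c : ℕ) (hc : c = u ∨ c = v) : (l, c) ∈ A ↔ (0, c) ∈ A :=
    iff_of_forall_iff_succ (Q := fun l => (l, c) ∈ A) (q := h)
      (fun k _ hk => mem_iff_mem_of_notMem_edgeBoundary (ends := ends m) (e := up k c) rfl
        (Set.disjoint_left.1 hline (.inr ⟨k, hk, by rcases hc with rfl | rfl <;> simp⟩)))
      ⟨l.zero_le, hl⟩ ⟨le_rfl, l.zero_le.trans_lt hl⟩
  have hchord : (0, u) ∈ A ↔ (0, v) ∈ A :=
    mem_iff_mem_of_notMem_edgeBoundary (ends := ends m) (e := chord u) (by rw [ends, hm])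
      (Set.disjoint_left.1 hline (.inl rfl))
  exact ⟨hcolumn u (.inl rfl), (hcolumn v (.inr rfl)).trans hchord.symm⟩

end GridEdge

/-- `m` contains `h` parallel chords around the interval `[p, q)`. -/
structure IsStalk (m : ℕ → ℕ) (h p q : ℕ) : Prop where
  le : h ≤ p
  le_right : p ≤ q
  apply : ∀ i < h, m (p - 1 - i) = q + i

/-- `A` contains all points below level `h` of some line of the leaf with `h` chords centred
at `c`. -/
def ContainsLine (A : Set (ℕ × ℕ)) (h c : ℕ) : Prop :=
  ∃ i < h, ∀ l < h, (l, c - 1 - i) ∈ A ∧ (l, c + i) ∈ A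

theorem ContainsLine.mono {A B : Set (ℕ × ℕ)} (hAB : A ⊆ B) {h c : ℕ} :
    ContainsLine A h c → ContainsLine B h c :=
  fun ⟨i, hi, hl⟩ => ⟨i, hi, fun l hlh => ⟨hAB (hl l hlh).1, hAB (hl l hlh).2⟩⟩

section Cut

open GridEdge

variable {m : ℕ → ℕ} {A : Set (ℕ × ℕ)} {h a b p q c : ℕ}

theorem IsStalk.exists_line_constant (H : IsStalk m h p q) {X : Set GridEdge}
    (hX : ∀ i < h, line h (p - 1 - i) (q + i) ⊆ X)
    (hcard : (edgeBoundary (ends m) A ∩ X).encard < h) :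
    ∃ i < h, ∀ l < h, ((l, p - 1 - i) ∈ A ↔ (0, p - 1 - i) ∈ A) ∧
      ((l, q + i) ∈ A ↔ (0, p - 1 - i) ∈ A) := by
  have hdisj : (Set.Iio h).PairwiseDisjoint fun i => line h (p - 1 - i) (q + i) := by
    intro i hi j hj hij
    have := H.le
    have := H.le_right
    simp only [Set.mem_Iio] at hi hj
    refine Set.disjoint_left.2 fun e hei hej => hij ?_
    obtain rfl | ⟨l, -, rfl | rfl⟩ := hei <;> obtain he | ⟨l', -, he | he⟩ := hej <;>
      simp only [chord.injEq, up.injEq, reduceCtorEq] at he <;> omega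
  obtain ⟨i, hi, hline⟩ := exists_disjoint_of_encard_lt hdisj hcard
  refine ⟨i, hi, fun l hl => iff_of_disjoint_line (H.apply i hi) ?_ hl⟩
  exact Set.disjoint_left.2 fun e he hA => Set.disjoint_left.1 hline he ⟨hA, hX i hi he⟩

theorem exists_ring_disjoint {B : Set GridEdge} (hcard : B.encard < h) :
    ∃ l < h, ∀ i, ring l i ∉ B := by
  have hdisj : (Set.Iio h).PairwiseDisjoint fun l => Set.range (ring l) := by
    intro l _ l' _ hl
    refine Set.disjoint_left.2 ?_
    rintro _ ⟨i, rfl⟩ ⟨j, hj⟩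
    cases hj
    exact hl rfl
  obtain ⟨l, hl, hB⟩ := exists_disjoint_of_encard_lt hdisj hcard
  exact ⟨l, hl, fun i => Set.disjoint_left.1 hB ⟨i, rfl⟩⟩

theorem IsStalk.exists_ring_constant (H : IsStalk m h p q) (ha : a + h ≤ p) (hb : q + h ≤ b)
    (hcard : (edgeBoundary (ends m) A ∩ (box m h a b \ box m h p q)).encard < h) :
    ∃ l < h, ∀ i ∈ Set.Ico a p ∪ Set.Ico q b, ∀ j ∈ Set.Ico a p ∪ Set.Ico q b,
      ((l, i) ∈ A ↔ (l, j) ∈ A) := by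
  have hpq := H.le_right
  obtain ⟨k, hk, hline⟩ := H.exists_line_constant
    (fun i hi => line_subset_box_diff (by omega) hpq (by omega) (by omega) (H.apply i hi)
      (.inl ⟨by omega, by omega⟩) (.inr ⟨by omega, by omega⟩)) hcard
  obtain ⟨l, hl, hring⟩ := exists_ring_disjoint hcard
  have hstep (i : ℕ) (hai : a ≤ i) (hib : i + 1 < b) (hout : ¬ (p ≤ i ∧ i + 1 < q)) :
      (l, i) ∈ A ↔ (l, i + 1) ∈ A :=
    mem_iff_mem_of_notMem_edgeBoundary (ends := ends m) (e := ring l i) rfl fun hA =>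
      hring i ⟨hA, ⟨hl, hai, hib⟩, fun hbox => hout hbox.2⟩
  have hjoin : (l, p - 1 - k) ∈ A ↔ (l, q + k) ∈ A := (hline l hl).1.trans (hline l hl).2.symm
  have hto (i : ℕ) (hi : i ∈ Set.Ico a p ∪ Set.Ico q b) : (l, i) ∈ A ↔ (l, p - 1 - k) ∈ A := by
    rcases hi with hi | hi
    · exact iff_of_forall_iff_succ (Q := fun i => (l, i) ∈ A)
        (fun i _ _ => hstep i (by omega) (by omega) (by omega)) hi ⟨by omega, by omega⟩
    · exact (iff_of_forall_iff_succ (Q := fun i => (l, i) ∈ A)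
        (fun i _ _ => hstep i (by omega) (by omega) (by omega)) hi
        ⟨by omega, by omega⟩).trans hjoin.symm
  exact ⟨l, hl, fun i hi j hj => (hto i hi).trans (hto j hj).symm⟩

/-- If fewer than `h` edges are cut, then a whole ring and a whole line of the leaf are uncut, so
that the points of `A` on this ring force the line into `A`. -/
theorem IsStalk.le_encard_of_not_containsLine (H : IsStalk m h p q) (ha : a + h ≤ p)
    (hb : q + h ≤ b) (hleaf : IsStalk m h c c)
    (hleaf_mem : ∀ i ∈ Set.Ico (c - h) (c + h), i ∈ Set.Ico a p ∪ Set.Ico q b)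
    (hring : ∀ l < h, ∃ i ∈ Set.Ico a p ∪ Set.Ico q b, (l, i) ∈ A) (hA : ¬ ContainsLine A h c) :
    h ≤ (edgeBoundary (ends m) A ∩ (box m h a b \ box m h p q)).encard := by
  by_contra! hcard
  have hpq := H.le_right
  have hhc := hleaf.le
  obtain ⟨l, hl, hconstant⟩ := H.exists_ring_constant ha hb hcard
  obtain ⟨i₀, hi₀, hi₀A⟩ := hring l hl
  obtain ⟨k, hk, hline⟩ := hleaf.exists_line_constant
    (fun i hi => line_subset_box_diff (by omega) hpq (by omega) (by omega) (hleaf.apply i hi)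
      (hleaf_mem _ ⟨by omega, by omega⟩) (hleaf_mem _ ⟨by omega, by omega⟩)) hcard
  have hk0 : (0, c - 1 - k) ∈ A :=
    (hline l hl).1.1 ((hconstant i₀ hi₀ _ (hleaf_mem _ ⟨by omega, by omega⟩)).1 hi₀A)
  exact hA ⟨k, hk, fun l' hl' => ⟨(hline l' hl').1.2 hk0, (hline l' hl').2.2 hk0⟩⟩

end Cut

/-- The sweep `A` completes its first line of the leaf centred at `c` at time `s`. -/
structure IsCriticalLeaf (m : ℕ → ℕ) (A : ℕ → Set (ℕ × ℕ)) (h s c : ℕ) : Prop where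
  isStalk : IsStalk m h c c
  notMem : ¬ ContainsLine (A s) h c
  mem : ContainsLine (A (s + 1)) h c

section Sweep

open GridEdge

variable {m : ℕ → ℕ} {A : ℕ → Set (ℕ × ℕ)} {X : Set (ℕ × ℕ)} {h s s' c c' : ℕ}

theorem IsCriticalLeaf.exists_mem_diff (H : IsCriticalLeaf m A h s c) :
    ∃ l, ∃ i ∈ Set.Ico (c - h) (c + h), (l, i) ∈ A (s + 1) \ A s := by
  have := H.isStalk.le
  obtain ⟨k, hk, hmem⟩ := H.mem
  by_contra! hdiff
  simp only [Set.mem_sdiff, not_and, not_not] at hdiff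
  exact H.notMem ⟨k, hk, fun l hl => ⟨hdiff l _ ⟨by omega, by omega⟩ (hmem l hl).1,
    hdiff l _ ⟨by omega, by omega⟩ (hmem l hl).2⟩⟩

theorem IsCriticalLeaf.ne_of_add_le (hA : IsSweep A X) (H : IsCriticalLeaf m A h s c)
    (H' : IsCriticalLeaf m A h s' c') (hc : c + h + h ≤ c') : s ≠ s' := by
  rintro rfl
  obtain ⟨w, hw⟩ := hA.step s
  obtain ⟨l, i, hi, hmem, hnot⟩ := H.exists_mem_diff
  obtain ⟨l', i', hi', hmem', hnot'⟩ := H'.exists_mem_diff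
  have heq : (l, i) = (l', i') :=
    ((hw hmem).resolve_right hnot).trans ((hw hmem').resolve_right hnot').symm
  have := congrArg Prod.snd heq
  simp only [Set.mem_Ico] at hi hi'
  omega

theorem IsStalk.exists_isCriticalLeaf (hA : IsSweep A X) (hh : 0 < h) (H : IsStalk m h c c)
    (hX : ∀ l < h, ∀ i < c + h, (l, i) ∈ X) : ∃ s, IsCriticalLeaf m A h s c := by
  by_contra! hcritical
  have hnot (t : ℕ) : ¬ ContainsLine (A t) h c := by
    induction t with
    | zero =>
      rintro ⟨i, -, hi⟩
      exact (hA.zero ▸ (hi 0 hh).1 : _ ∈ (∅ : Set _))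
    | succ t ih => exact fun hmem => hcritical t ⟨H, ih, hmem⟩
  obtain ⟨N, hN⟩ := hA.exists_subset
  exact hnot N ⟨0, hh, fun l hl => ⟨hN (hX l hl _ (by omega)), hN (hX l hl _ (by omega))⟩⟩

theorem IsCriticalLeaf.exists_mem_of_lt (hA : IsSweep A X) (H : IsCriticalLeaf m A h s c) {l : ℕ}
    (hl : l < h) : ∃ i ∈ Set.Ico (c - h) (c + h), (l, i) ∈ A s := by
  have hc := H.isStalk.le
  obtain ⟨k, hk, hmem⟩ := H.mem
  obtain ⟨w, hw⟩ := hA.step s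
  rcases hw (hmem l hl).1 with hleft | hleft
  · rcases hw (hmem l hl).2 with hright | hright
    · have := congrArg Prod.snd (hleft.trans hright.symm)
      simp only at this
      omega
    · exact ⟨_, ⟨by omega, by omega⟩, hright⟩
  · exact ⟨_, ⟨by omega, by omega⟩, hleft⟩

theorem IsCriticalLeaf.le_encard (hA : IsSweep A X) (H : IsCriticalLeaf m A h s c) :
    h ≤ (edgeBoundary (ends m) (A s) ∩ box m h (c - h) (c + h)).encard := by
  have hc := H.isStalk.le
  have hcover (i : ℕ) (hi : i ∈ Set.Ico (c - h) (c + h)) :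
      i ∈ Set.Ico (c - h) c ∪ Set.Ico c (c + h) := by
    rwa [Set.Ico_union_Ico_eq_Ico (Nat.sub_le c h) (Nat.le_add_right c h)]
  refine (H.isStalk.le_encard_of_not_containsLine (a := c - h) (by omega) le_rfl H.isStalk
    hcover (fun l hl => ?_) H.notMem).trans
    (Set.encard_le_encard (Set.inter_subset_inter_right _ Set.sdiff_subset))
  obtain ⟨i, hi, hmem⟩ := H.exists_mem_of_lt hA hl
  exact ⟨i, hcover i hi, hmem⟩

/-- When the middle one of three leaves becomes critical, the first one contains a full line and
the last one does not, which forces cut edges outside the part of the middle one. -/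
theorem IsStalk.add_le_encard_of_isCriticalLeaf (hA : IsSweep A X) {a b p q n t u c₁ c₂ : ℕ}
    (H : IsStalk m h p q) (ha : a + h ≤ p) (hb : q + h ≤ b)
    (H₁ : IsCriticalLeaf m A h t c₁) (H₂ : IsCriticalLeaf m A h u c₂) (hts : t < s) (hsu : s < u)
    (hc₁ : ∀ i ∈ Set.Ico (c₁ - h) (c₁ + h), i ∈ Set.Ico a p ∪ Set.Ico q b)
    (hc₂ : ∀ i ∈ Set.Ico (c₂ - h) (c₂ + h), i ∈ Set.Ico a p ∪ Set.Ico q b)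
    (hn : n ≤ (edgeBoundary (ends m) (A s) ∩ box m h p q).encard) :
    (n + h : ℕ) ≤ (edgeBoundary (ends m) (A s) ∩ box m h a b).encard := by
  have hc₁h := H₁.isStalk.le
  have houtside := H.le_encard_of_not_containsLine ha hb H₂.isStalk hc₂ (A := A s)
    (fun l hl => by
      obtain ⟨i, hi, hline⟩ := H₁.mem.mono (hA.mono hts)
      exact ⟨_, hc₁ _ ⟨by omega, by omega⟩, (hline l hl).1⟩)
    (fun hline => H₂.notMem (hline.mono (hA.mono hsu.le)))
  have hbox : box m h p q ⊆ box m h a b := box_mono (by omega) (by omega)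
  calc ((n + h : ℕ) : ℕ∞)
      ≤ (edgeBoundary (ends m) (A s) ∩ box m h p q).encard +
        (edgeBoundary (ends m) (A s) ∩ (box m h a b \ box m h p q)).encard := by
        rw [Nat.cast_add]; exact add_le_add hn houtside
    _ = (edgeBoundary (ends m) (A s) ∩ box m h a b).encard := by
        rw [← Set.encard_union_eq (Set.disjoint_sdiff_right.mono
          Set.inter_subset_right Set.inter_subset_right), ← Set.inter_union_distrib_left,
          Set.union_sdiff_cancel hbox]

end Sweep

namespace NoncrossingMatching

open GridEdge

variable {m : ℕ → ℕ} {h k a : ℕ}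

theorem OccursAt.isStalk {d : NoncrossingMatching} (H : (d.stalk h).OccursAt m a) :
    IsStalk m h (a + h) (a + h + d.size) where
  le := Nat.le_add_left h a
  le_right := Nat.le_add_right _ _
  apply i hi := by
    rw [show a + h - 1 - i = a + (h - 1 - i) by omega, H.apply_stalk (by omega)]
    omega

theorem OccursAt.exists_branches (H : (ternaryTree h (k + 1)).OccursAt m a) :
    ∃ y : Fin 3 → ℕ, (∀ i j, i < j → y i + (ternaryTree h k).size ≤ y j) ∧
      (∀ i, a + h ≤ y i ∧
        y i + (ternaryTree h k).size + h ≤ a + (ternaryTree h (k + 1)).size) ∧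
      ∀ i, IsStalk m h (y i) (y i + (ternaryTree h k).size) ∧
        (ternaryTree h k).OccursAt m (y i) := by
  have hsize := size_ternaryTree_succ h k
  have H₀ := H.inner
  have H₁ := H.rest.inner.inner
  have H₂ := H.rest.inner.rest.inner
  simp only [size_stalk] at H₁ H₂
  let n := (ternaryTree h k).size + 2 * h + 2
  refine ⟨![a + 1 + h, a + n + 1 + 1 + h, a + n + 1 + n + 1 + h], ?_, ?_, ?_⟩
  · intro i j hij
    fin_cases i <;> fin_cases j <;> simp [n] at hij ⊢ <;> omega
  · intro i
    fin_cases i <;> simp [n] <;> omega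
  · intro i
    fin_cases i
    exacts [⟨H₀.isStalk, H₀.of_stalk⟩, ⟨H₁.isStalk, H₁.of_stalk⟩, ⟨H₂.isStalk, H₂.of_stalk⟩]

variable {A : ℕ → Set (ℕ × ℕ)} {X : Set (ℕ × ℕ)}

theorem mem_Ico_union_Ico_of_ne {ι : Type*} [LinearOrder ι] {y : ι → ℕ} {n b x : ℕ} {i j : ι}
    (hy : ∀ i j, i < j → y i + n ≤ y j) (hab : ∀ i, a ≤ y i ∧ y i + n ≤ b) (hji : j ≠ i)
    (hx : x ∈ Set.Ico (y j) (y j + n)) : x ∈ Set.Ico a (y i) ∪ Set.Ico (y i + n) b := by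
  obtain ⟨hax, hxb⟩ := hab j
  obtain ⟨hyx, hxy⟩ := hx
  rcases hji.lt_or_gt with hlt | hlt
  · exact .inl ⟨hax.trans hyx, hxy.trans_le (hy j i hlt)⟩
  · exact .inr ⟨(hy i j hlt).trans hyx, hxy.trans_le hxb⟩

theorem OccursAt.exists_isCriticalLeaf (hA : IsSweep A X) (hh : 0 < h)
    (H : (ternaryTree h k).OccursAt m a)
    (hX : ∀ l < h, ∀ i < a + (ternaryTree h k).size, (l, i) ∈ X) :
    ∃ s c, IsCriticalLeaf m A h s c ∧ a + h ≤ c ∧ c + h ≤ a + (ternaryTree h k).size ∧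
      ((k + 1) * h : ℕ) ≤ (edgeBoundary (ends m) (A s) ∩
        box m h a (a + (ternaryTree h k).size)).encard := by
  induction k generalizing a with
  | zero =>
    have hsize : (ternaryTree h 0).size = 2 * h := by simp [ternaryTree, size_stalk, size]
    have hstalk : IsStalk m h (a + h) (a + h) := OccursAt.isStalk (d := nil) H
    obtain ⟨s, hs⟩ := hstalk.exists_isCriticalLeaf hA hh fun l hl i hi => hX l hl i (by omega)
    refine ⟨s, a + h, hs, le_rfl, by omega, ?_⟩
    have hcut := hs.le_encard hA
    rw [Nat.add_sub_cancel, add_assoc, ← two_mul, ← hsize] at hcut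
    rwa [zero_add, one_mul]
  | succ k ih =>
    obtain ⟨y, hy, hya, hbranch⟩ := H.exists_branches
    choose s c hs hyc hcy hcut using fun i => ih (hbranch i).2
      fun l hl j hj => hX l hl j (by have := hya i; omega)
    have hs_inj : Function.Injective s := .of_lt_imp_ne fun i j hij =>
      (hs i).ne_of_add_le hA (hs j) (by have := hy i j hij; have := hcy i; have := hyc j; omega)
    obtain ⟨i₁, i, i₂, hi₁, hi₂⟩ := exists_lt_and_lt_of_injective hs_inj
    have houtside (j : Fin 3) (hji : j ≠ i) (x : ℕ) (hx : x ∈ Set.Ico (c j - h) (c j + h)) :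
        x ∈ Set.Ico a (y i) ∪
          Set.Ico (y i + (ternaryTree h k).size) (a + (ternaryTree h (k + 1)).size) := by
      have := hyc j; have := hcy j; have := hx.1; have := hx.2
      exact mem_Ico_union_Ico_of_ne hy (fun i => ⟨by have := hya i; omega, by have := hya i; omega⟩)
        hji ⟨by omega, by omega⟩
    have := hya i; have := hyc i; have := hcy i
    refine ⟨s i, c i, hs i, by omega, by omega, ?_⟩
    rw [add_mul (k + 1), one_mul]
    exact (hbranch i).1.add_le_encard_of_isCriticalLeaf hA (hya i).1 (hya i).2 (hs i₁) (hs i₂)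
      hi₁ hi₂ (houtside i₁ (ne_of_apply_ne s hi₁.ne)) (houtside i₂ (ne_of_apply_ne s hi₂.ne'))
      (hcut i)

end NoncrossingMatching

/-! ### The ring tower over a noncrossing matching -/

/-- Concentric rings at levels `0, …, height`. The points of `matching` sit on the innermost ring,
which bounds a disc containing the chords. The first `thickness + 1` rings have the same length;
after that the number of points on a ring is halved from level to level down to one, which keeps
the diameter of the tower linear in `height`. -/
structure RingTower where
  matching : NoncrossingMatching
  thickness : ℕ
  height : ℕ
  thickness_lt_height : thickness < height
  size_pos : 0 < matching.size
  size_sub_one_lt : matching.size - 1 < 2 ^ (height - thickness)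

/-- A label for a face of a ring tower: `annulus l i` has the edge `ring l i` at its inner side,
`disc j` is the region of the innermost disc numbered `j`, and `outer` is the unbounded face. -/
inductive TowerFace
  | annulus (l i : ℕ)
  | disc (j : ℕ)
  | outer

namespace RingTower

variable (T : RingTower) {l i : ℕ}

/-- The largest position on the ring at level `l`. -/
def last (l : ℕ) : ℕ := (T.matching.size - 1) / 2 ^ (l - T.thickness)

/-- The position above `i` on the ring at level `l + 1`. -/
def parent (l i : ℕ) : ℕ := if l < T.thickness then i else i / 2

/-- The first position on level `l` below position `i` of level `l + 1`. -/
def firstChild (l i : ℕ) : ℕ := if l < T.thickness then i else 2 * i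

/-- The last position on level `l` below position `i` of level `l + 1`. -/
def lastChild (l i : ℕ) : ℕ := if l < T.thickness then i else min (2 * i + 1) (T.last l)

/-- The cyclic successor of a position on level `l`. -/
def next (l i : ℕ) : ℕ := if i = T.last l then 0 else i + 1

/-- The cyclic predecessor of a position on level `l`. -/
def prev (l i : ℕ) : ℕ := if i = 0 then T.last l else i - 1

theorem last_of_le (hl : l ≤ T.thickness) : T.last l = T.matching.size - 1 := by
  rw [last, Nat.sub_eq_zero_of_le hl, pow_zero, Nat.div_one]

theorem last_height : T.last T.height = 0 := Nat.div_eq_of_lt T.size_sub_one_lt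

theorem last_succ (l : ℕ) :
    T.last (l + 1) = if l < T.thickness then T.last l else T.last l / 2 := by
  split_ifs with hl
  · rw [T.last_of_le hl, T.last_of_le hl.le]
  · rw [last, last, Nat.succ_sub (not_lt.1 hl), pow_succ, Nat.div_div_eq_div_mul]

theorem le_last_iff_of_le (hl : l ≤ T.thickness) : i ≤ T.last l ↔ i < T.matching.size := by
  have := T.size_pos
  rw [T.last_of_le hl]
  omega

theorem last_lt_size (l : ℕ) : T.last l < T.matching.size :=
  (Nat.div_le_self _ _).trans_lt (Nat.sub_one_lt T.size_pos.ne')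

theorem parent_le (hi : i ≤ T.last l) : T.parent l i ≤ T.last (l + 1) := by
  rw [T.last_succ, parent]
  split_ifs <;> omega

theorem firstChild_le (hi : i ≤ T.last (l + 1)) : T.firstChild l i ≤ T.last l := by
  rw [T.last_succ] at hi
  unfold firstChild
  split_ifs at * <;> omega

theorem lastChild_le (hi : i ≤ T.last (l + 1)) : T.lastChild l i ≤ T.last l := by
  rw [T.last_succ] at hi
  unfold lastChild
  split_ifs at * <;> omega

theorem parent_firstChild (l i : ℕ) : T.parent l (T.firstChild l i) = i := by
  unfold firstChild parent
  split_ifs <;> omega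

theorem parent_lastChild (hi : i ≤ T.last (l + 1)) : T.parent l (T.lastChild l i) = i := by
  rw [T.last_succ] at hi
  unfold lastChild parent
  split_ifs at * <;> omega

theorem lastChild_last (l : ℕ) : T.lastChild l (T.last (l + 1)) = T.last l := by
  rw [T.last_succ, lastChild]
  split_ifs <;> omega

theorem next_le (hi : i ≤ T.last l) : T.next l i ≤ T.last l := by
  unfold next
  split_ifs <;> omega

theorem next_last (l : ℕ) : T.next l (T.last l) = 0 := if_pos rfl

theorem next_of_lt (hi : i < T.last l) : T.next l i = i + 1 := if_neg hi.ne

theorem prev_le (hi : i ≤ T.last l) : T.prev l i ≤ T.last l := by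
  unfold prev
  split_ifs <;> omega

theorem next_prev (hi : i ≤ T.last l) : T.next l (T.prev l i) = i := by
  unfold prev next
  split_ifs <;> omega

theorem prev_next (l i : ℕ) : T.prev l (T.next l i) = i := by
  by_cases h : i = T.last l <;> simp [prev, next, h]

theorem prev_firstChild_next (hi : i ≤ T.last (l + 1)) :
    T.prev l (T.firstChild l (T.next (l + 1) i)) = T.lastChild l i := by
  unfold prev firstChild next lastChild
  rw [T.last_succ] at *
  split_ifs at * <;> omega

theorem succ_le_last_of_ne_lastChild (hi : i ≤ T.last l)
    (hne : i ≠ T.lastChild l (T.parent l i)) : i + 1 ≤ T.last l := by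
  unfold lastChild parent at hne
  split_ifs at hne <;> omega

theorem parent_succ_of_ne_lastChild (hi : i ≤ T.last l)
    (hne : i ≠ T.lastChild l (T.parent l i)) : T.parent l (i + 1) = T.parent l i := by
  unfold lastChild parent at *
  split_ifs at * <;> omega

theorem pred_ne_lastChild_of_ne_firstChild (hi : i ≤ T.last l)
    (hne : i ≠ T.firstChild l (T.parent l i)) :
    i - 1 ≠ T.lastChild l (T.parent l (i - 1)) ∧ i - 1 + 1 = i := by
  unfold firstChild lastChild parent at *
  split_ifs at * <;> omega

/-- The vertices of the tower, as pairs of a level and a position. -/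
def IsVertex (x : ℕ × ℕ) : Prop := x.1 ≤ T.height ∧ x.2 ≤ T.last x.1

/-- The edges of the tower. They reuse the labels of grid edges, but `ring` closes up cyclically
and `up` ends at the parent. -/
def IsEdge : GridEdge → Prop
  | .ring l i => l ≤ T.height ∧ i ≤ T.last l
  | .up l i => l < T.height ∧ i ≤ T.last l
  | .chord i => i < T.matching.partner i

/-- The faces of the tower. -/
def IsFace : TowerFace → Prop
  | .annulus l i => l < T.height ∧ i ≤ T.last l
  | .disc 0 => True
  | .disc (j + 1) => j < T.matching.partner j
  | .outer => True

/-- The chord at position `i` of the innermost ring, directed away from `i`. -/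
def chordDart (i : ℕ) : GridEdge × Bool :=
  if i < T.matching.partner i then (.chord i, false) else (.chord (T.matching.partner i), true)

/-- The start vertex of a dart. -/
def dartVertex : GridEdge × Bool → ℕ × ℕ
  | (.ring l i, false) => (l, i)
  | (.ring l i, true) => (l, T.next l i)
  | (.up l i, false) => (l, i)
  | (.up l i, true) => (l + 1, T.parent l i)
  | (.chord i, false) => (0, i)
  | (.chord i, true) => (0, T.matching.partner i)

/-- The face to the right of a dart. -/
def dartFace : GridEdge × Bool → TowerFace
  | (.ring 0 i, false) => .disc (T.matching.region (i + 1))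
  | (.ring (l + 1) i, false) => .annulus l (T.lastChild l i)
  | (.ring l i, true) => if l < T.height then .annulus l i else .outer
  | (.up l i, false) => .annulus l i
  | (.up l i, true) => .annulus l (T.prev l i)
  | (.chord i, false) => .disc (T.matching.region i)
  | (.chord i, true) => .disc (T.matching.region (T.matching.partner i))

/-- The next dart counterclockwise around the start vertex of a dart. -/
def rotate : GridEdge × Bool → GridEdge × Bool
  | (.ring l i, false) => if l < T.height then (.up l i, false) else (.ring l (T.prev l i), true)
  | (.ring 0 i, true) => T.chordDart (T.next 0 i)
  | (.ring (l + 1) i, true) => (.up l (T.firstChild l (T.next (l + 1) i)), true)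
  | (.up l i, false) => (.ring l (T.prev l i), true)
  | (.up l i, true) =>
    if i = T.lastChild l (T.parent l i) then (.ring (l + 1) (T.parent l i), false)
    else (.up l (i + 1), true)
  | (.chord i, false) => (.ring 0 i, false)
  | (.chord i, true) => (.ring 0 (T.matching.partner i), false)

/-- The next dart clockwise around the start vertex of a dart. -/
def rotateInv : GridEdge × Bool → GridEdge × Bool
  | (.ring 0 i, false) => T.chordDart i
  | (.ring (l + 1) i, false) => (.up l (T.lastChild l i), true)
  | (.ring l i, true) =>
    if l < T.height then (.up l (T.next l i), false) else (.ring l (T.next l i), false)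
  | (.up l i, false) => (.ring l i, false)
  | (.up l i, true) =>
    if i = T.firstChild l (T.parent l i) then (.ring (l + 1) (T.prev (l + 1) (T.parent l i)), true)
    else (.up l (i - 1), true)
  | (.chord i, false) => (.ring 0 (T.prev 0 i), true)
  | (.chord i, true) => (.ring 0 (T.prev 0 (T.matching.partner i)), true)

variable {T}

theorem le_last_zero_iff : i ≤ T.last 0 ↔ i < T.matching.size :=
  T.le_last_iff_of_le (Nat.zero_le _)

theorem le_last_zero_of_lt_partner (h : i < T.matching.partner i) : i ≤ T.last 0 :=
  le_last_zero_iff.2 (T.matching.lt_size_of_lt_partner h)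

theorem partner_le_last_zero_of_lt_partner (h : i < T.matching.partner i) :
    T.matching.partner i ≤ T.last 0 :=
  le_last_zero_iff.2 (T.matching.partner_lt (T.matching.lt_size_of_lt_partner h))

theorem isEdge_chordDart (hi : i ≤ T.last 0) : T.IsEdge (T.chordDart i).1 := by
  unfold chordDart
  split_ifs with h
  · exact h
  · have hne := T.matching.partner_ne (le_last_zero_iff.1 hi)
    change T.matching.partner i < T.matching.partner (T.matching.partner i)
    rw [T.matching.partner_partner]
    omega

theorem rotate_chordDart (i : ℕ) : T.rotate (T.chordDart i) = (.ring 0 i, false) := by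
  unfold chordDart
  split_ifs
  · rfl
  · simp only [rotate, T.matching.partner_partner]

theorem dartVertex_chordDart (i : ℕ) : T.dartVertex (T.chordDart i) = (0, i) := by
  unfold chordDart
  split_ifs
  · rfl
  · simp only [dartVertex, T.matching.partner_partner]

theorem dartFace_chordDart (i : ℕ) :
    T.dartFace (T.chordDart i) = .disc (T.matching.region i) := by
  unfold chordDart
  split_ifs
  · rfl
  · simp only [dartFace, T.matching.partner_partner]

theorem isEdge_rotate : ∀ {d : GridEdge × Bool}, T.IsEdge d.1 → T.IsEdge (T.rotate d).1
  | (.ring l i, false), ⟨hl, hi⟩ => by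
    simp only [rotate]
    split_ifs with h
    exacts [⟨h, hi⟩, ⟨hl, T.prev_le hi⟩]
  | (.ring 0 i, true), ⟨_, hi⟩ => isEdge_chordDart (T.next_le hi)
  | (.ring (l + 1) i, true), ⟨hl, hi⟩ => ⟨hl, T.firstChild_le (T.next_le hi)⟩
  | (.up l i, false), ⟨hl, hi⟩ => ⟨hl.le, T.prev_le hi⟩
  | (.up l i, true), ⟨hl, hi⟩ => by
    simp only [rotate]
    split_ifs with h
    exacts [⟨hl, T.parent_le hi⟩, ⟨hl, T.succ_le_last_of_ne_lastChild hi h⟩]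
  | (.chord i, false), hi => ⟨Nat.zero_le _, le_last_zero_of_lt_partner hi⟩
  | (.chord i, true), hi => ⟨Nat.zero_le _, partner_le_last_zero_of_lt_partner hi⟩

theorem isEdge_rotateInv : ∀ {d : GridEdge × Bool}, T.IsEdge d.1 → T.IsEdge (T.rotateInv d).1
  | (.ring 0 i, false), ⟨_, hi⟩ => isEdge_chordDart hi
  | (.ring (l + 1) i, false), ⟨hl, hi⟩ => ⟨hl, T.lastChild_le hi⟩
  | (.ring l i, true), ⟨hl, hi⟩ => by
    simp only [rotateInv]
    split_ifs with h
    exacts [⟨h, T.next_le hi⟩, ⟨hl, T.next_le hi⟩]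
  | (.up l i, false), ⟨hl, hi⟩ => ⟨hl.le, hi⟩
  | (.up l i, true), ⟨hl, hi⟩ => by
    simp only [rotateInv]
    split_ifs with h
    exacts [⟨hl, T.prev_le (T.parent_le hi)⟩, ⟨hl, (Nat.sub_le _ _).trans hi⟩]
  | (.chord i, false), hi => ⟨Nat.zero_le _, T.prev_le (le_last_zero_of_lt_partner hi)⟩
  | (.chord i, true), hi => ⟨Nat.zero_le _, T.prev_le (partner_le_last_zero_of_lt_partner hi)⟩

theorem rotate_rotateInv : ∀ {d : GridEdge × Bool}, T.IsEdge d.1 → T.rotate (T.rotateInv d) = d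
  | (.ring 0 i, false), _ => rotate_chordDart i
  | (.ring (l + 1) i, false), ⟨_, hi⟩ => by
    simp only [rotateInv, rotate, T.parent_lastChild hi, if_true]
  | (.ring l i, true), _ => by
    simp only [rotateInv]
    split_ifs with h
    · simp only [rotate, T.prev_next]
    · simp only [rotate, T.prev_next, if_neg h]
  | (.up l i, false), ⟨hl, _⟩ => by simp only [rotateInv, rotate, if_pos hl]
  | (.up l i, true), ⟨_, hi⟩ => by
    simp only [rotateInv]
    split_ifs with h
    · simp only [rotate, T.next_prev (T.parent_le hi), ← h]
    · obtain ⟨hne, hsucc⟩ := T.pred_ne_lastChild_of_ne_firstChild hi h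
      simp only [rotate, if_neg hne, hsucc]
  | (.chord i, false), hi => by
    simp only [rotateInv, rotate, T.next_prev (le_last_zero_of_lt_partner hi), chordDart,
      if_pos (show i < _ from hi)]
  | (.chord i, true), hi => by
    simp only [rotateInv, rotate, T.next_prev (partner_le_last_zero_of_lt_partner hi), chordDart,
      T.matching.partner_partner, if_neg (not_lt_of_gt (show i < _ from hi))]

theorem isVertex_dartVertex :
    ∀ {d : GridEdge × Bool}, T.IsEdge d.1 → T.IsVertex (T.dartVertex d)
  | (.ring _ _, false), h => h
  | (.ring _ _, true), ⟨hl, hi⟩ => ⟨hl, T.next_le hi⟩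
  | (.up _ _, false), ⟨hl, hi⟩ => ⟨hl.le, hi⟩
  | (.up _ _, true), ⟨hl, hi⟩ => ⟨hl, T.parent_le hi⟩
  | (.chord _, false), hi => ⟨Nat.zero_le _, le_last_zero_of_lt_partner hi⟩
  | (.chord _, true), hi => ⟨Nat.zero_le _, partner_le_last_zero_of_lt_partner hi⟩

theorem isFace_disc_region (g : ℕ) : T.IsFace (.disc (T.matching.region g)) := by
  rcases hregion : T.matching.region g with _ | j
  · trivial
  · exact T.matching.lt_partner_of_region_eq_succ hregion

theorem isFace_dartFace : ∀ {d : GridEdge × Bool}, T.IsEdge d.1 → T.IsFace (T.dartFace d)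
  | (.ring 0 i, false), _ => isFace_disc_region _
  | (.ring (l + 1) i, false), ⟨hl, hi⟩ => ⟨hl, T.lastChild_le hi⟩
  | (.ring l i, true), ⟨_, hi⟩ => by
    simp only [dartFace]
    split_ifs with h
    exacts [⟨h, hi⟩, trivial]
  | (.up _ _, false), h => h
  | (.up l i, true), ⟨hl, hi⟩ => ⟨hl, T.prev_le hi⟩
  | (.chord i, false), _ => isFace_disc_region _
  | (.chord i, true), _ => isFace_disc_region _

theorem dartVertex_rotate :
    ∀ {d : GridEdge × Bool}, T.IsEdge d.1 → T.dartVertex (T.rotate d) = T.dartVertex d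
  | (.ring l i, false), ⟨_, hi⟩ => by
    simp only [rotate]
    split_ifs
    · rfl
    · simp only [dartVertex, T.next_prev hi]
  | (.ring 0 i, true), _ => dartVertex_chordDart _
  | (.ring (l + 1) i, true), _ => by simp only [rotate, dartVertex, T.parent_firstChild]
  | (.up l i, false), ⟨_, hi⟩ => by simp only [rotate, dartVertex, T.next_prev hi]
  | (.up l i, true), ⟨_, hi⟩ => by
    simp only [rotate]
    split_ifs with h
    · rfl
    · simp only [dartVertex, T.parent_succ_of_ne_lastChild hi h]
  | (.chord i, false), _ => rfl
  | (.chord i, true), _ => rfl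

theorem region_next (i : ℕ) : T.matching.region (T.next 0 i) = T.matching.region (i + 1) := by
  unfold next
  split_ifs with h
  · have hsize : i + 1 = T.matching.size := by
      rw [h, T.last_of_le (Nat.zero_le _), Nat.sub_add_cancel T.size_pos]
    rw [hsize, T.matching.region_zero, T.matching.region_size]
  · rfl

theorem dartFace_rotate :
    ∀ {d : GridEdge × Bool}, T.IsEdge d.1 → T.dartFace (T.rotate d) = T.dartFace (dartRev d)
  | (.ring l i, false), _ => by
    simp only [rotate]
    split_ifs with h <;> simp only [dartRev, dartFace, Bool.not_false, h, if_true, if_false]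
  | (.ring 0 i, true), _ => by
    rw [rotate, dartFace_chordDart, region_next]
    rfl
  | (.ring (l + 1) i, true), ⟨_, hi⟩ => by
    simp only [rotate, dartRev, Bool.not_true, dartFace, T.prev_firstChild_next hi]
  | (.up l i, false), ⟨hl, _⟩ => by
    simp only [rotate, dartRev, Bool.not_false, dartFace, if_pos hl]
  | (.up l i, true), _ => by
    simp only [rotate, dartRev, Bool.not_true]
    split_ifs with h
    · simp only [dartFace, ← h]
    · simp [dartFace, prev]
  | (.chord i, false), hi => by
    simp only [rotate, dartRev, Bool.not_false, dartFace,
      T.matching.region_succ_eq_region_partner (T.matching.lt_size_of_lt_partner hi)]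
  | (.chord i, true), hi => by
    simp only [rotate, dartRev, Bool.not_true, dartFace, T.matching.partner_partner,
      T.matching.region_succ_eq_region_partner
        (T.matching.partner_lt (T.matching.lt_size_of_lt_partner hi))]

section Connectivity

variable {O : Set (GridEdge × Bool)}

theorem ring_next_mem (hrotateInv : Set.MapsTo T.rotateInv O O)
    (hrev : Set.MapsTo dartRev O O) (h : (.ring l i, false) ∈ O) :
    (.ring l (T.next l i), false) ∈ O := by
  have hturn := hrotateInv (hrev h)
  simp only [dartRev, Bool.not_false, rotateInv] at hturn
  split_ifs at hturn
  exacts [hrotateInv hturn, hturn]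

theorem ring_mem_of_ring_zero_mem (hrotateInv : Set.MapsTo T.rotateInv O O)
    (hrev : Set.MapsTo dartRev O O) (h : (.ring l 0, false) ∈ O) :
    ∀ {i}, i ≤ T.last l → (.ring l i, false) ∈ O
  | 0, _ => h
  | _ + 1, hi => T.next_of_lt hi ▸
      ring_next_mem hrotateInv hrev
        (ring_mem_of_ring_zero_mem hrotateInv hrev h (Nat.le_of_succ_le hi))

theorem ring_zero_mem_of_ring_last_succ_mem (hrotateInv : Set.MapsTo T.rotateInv O O)
    (hrev : Set.MapsTo dartRev O O) (h : (.ring (l + 1) (T.last (l + 1)), false) ∈ O) :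
    (.ring l 0, false) ∈ O := by
  have hdown := hrotateInv h
  simp only [rotateInv, T.lastChild_last] at hdown
  exact T.next_last l ▸ ring_next_mem hrotateInv hrev (hrotateInv (hrev hdown))

theorem ring_mem (hrotateInv : Set.MapsTo T.rotateInv O O) (hrev : Set.MapsTo dartRev O O)
    (hroot : (.ring T.height 0, false) ∈ O) (hl : l ≤ T.height) (hi : i ≤ T.last l) :
    (.ring l i, false) ∈ O := by
  suffices h : (.ring l 0, false) ∈ O from ring_mem_of_ring_zero_mem hrotateInv hrev h hi
  clear hi
  induction hl using Nat.decreasingInduction with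
  | self => exact hroot
  | of_succ l _ ih =>
    exact ring_zero_mem_of_ring_last_succ_mem hrotateInv hrev
      (ring_mem_of_ring_zero_mem hrotateInv hrev ih le_rfl)

theorem dart_mem (hrotateInv : Set.MapsTo T.rotateInv O O) (hrev : Set.MapsTo dartRev O O)
    (hroot : (.ring T.height 0, false) ∈ O) (hrotate : Set.MapsTo T.rotate O O) :
    ∀ {d : GridEdge × Bool}, T.IsEdge d.1 → d ∈ O := by
  have hfalse : ∀ e, T.IsEdge e → (e, false) ∈ O
    | .ring l i, ⟨hl, hi⟩ => ring_mem hrotateInv hrev hroot hl hi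
    | .up l i, ⟨hl, hi⟩ => by
      have h := hrotate (ring_mem hrotateInv hrev hroot hl.le hi)
      rwa [rotate, if_pos hl] at h
    | .chord i, hi => by
      have h := hrotateInv (ring_mem hrotateInv hrev hroot (Nat.zero_le _)
        (le_last_zero_of_lt_partner hi))
      rwa [rotateInv, chordDart, if_pos (show i < _ from hi)] at h
  rintro ⟨e, _ | _⟩ he
  exacts [hfalse e he, hrev (hfalse e he)]

end Connectivity

end RingTower

namespace RingTower

variable (T : RingTower) {l i : ℕ}

/-- The vertices of the tower, as a type. -/
abbrev Vertex : Type := {x : ℕ × ℕ // T.IsVertex x}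

/-- The edges of the tower, as a type. -/
abbrev Edge : Type := {e : GridEdge // T.IsEdge e}

/-- The faces of the tower, as a type. -/
abbrev Face : Type := {f : TowerFace // T.IsFace f}

/-- The faces between two consecutive rings; they are also the edges between these rings. -/
abbrev AnnulusFace : Type := {x : ℕ × ℕ // x.1 < T.height ∧ x.2 ≤ T.last x.1}

/-- The chords of the tower, represented by their left ends. -/
abbrev Chord : Type := {i : ℕ // i < T.matching.partner i}

/-- The edges are the ring edges (one per vertex), the edges between rings and the chords. -/
def edgeEquiv : T.Edge ≃ T.Vertex ⊕ T.AnnulusFace ⊕ T.Chord where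
  toFun
    | ⟨.ring l i, h⟩ => .inl ⟨(l, i), h⟩
    | ⟨.up l i, h⟩ => .inr (.inl ⟨(l, i), h⟩)
    | ⟨.chord i, h⟩ => .inr (.inr ⟨i, h⟩)
  invFun
    | .inl x => ⟨.ring x.1.1 x.1.2, x.2⟩
    | .inr (.inl x) => ⟨.up x.1.1 x.1.2, x.2⟩
    | .inr (.inr x) => ⟨.chord x.1, x.2⟩
  left_inv := by rintro ⟨_ | _ | _, _⟩ <;> rfl
  right_inv := by rintro (_ | _ | _) <;> rfl

/-- The faces are the annulus faces, the unbounded face and the regions of the disc. -/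
def faceEquiv : T.Face ≃ T.AnnulusFace ⊕ Option (Option T.Chord) where
  toFun
    | ⟨.annulus l i, h⟩ => .inl ⟨(l, i), h⟩
    | ⟨.disc 0, _⟩ => .inr (some none)
    | ⟨.disc (j + 1), h⟩ => .inr (some (some ⟨j, h⟩))
    | ⟨.outer, _⟩ => .inr none
  invFun
    | .inl x => ⟨.annulus x.1.1 x.1.2, x.2⟩
    | .inr (some none) => ⟨.disc 0, trivial⟩
    | .inr (some (some x)) => ⟨.disc (x.1 + 1), x.2⟩
    | .inr none => ⟨.outer, trivial⟩
  left_inv := by rintro ⟨_ | (_ | _) | _, _⟩ <;> rfl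
  right_inv := by rintro (_ | _ | _ | _) <;> rfl

theorem finite_setOf_isVertex : {x | T.IsVertex x}.Finite :=
  ((Set.finite_Iic T.height).prod (Set.finite_Iio T.matching.size)).subset
    fun x hx => ⟨hx.1, hx.2.trans_lt (T.last_lt_size x.1)⟩

instance : Finite T.Vertex := T.finite_setOf_isVertex.to_subtype

instance : Finite T.AnnulusFace :=
  (T.finite_setOf_isVertex.subset fun _ hx => ⟨hx.1.le, hx.2⟩).to_subtype

instance : Finite T.Chord :=
  ((Set.finite_Iio T.matching.size).subset
    fun _ hi => T.matching.lt_size_of_lt_partner hi).to_subtype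

instance : Finite T.Edge := .of_equiv _ T.edgeEquiv.symm

instance : Finite T.Face := .of_equiv _ T.faceEquiv.symm

theorem card_vertex_add_card_face :
    Nat.card T.Vertex + Nat.card T.Face = Nat.card T.Edge + 2 := by
  rw [Nat.card_congr T.edgeEquiv, Nat.card_congr T.faceEquiv, Nat.card_sum, Nat.card_sum,
    Nat.card_sum, Finite.card_option, Finite.card_option]
  ring

variable {T} in
/-- The dart of the tower with a given label. -/
def dart (d : GridEdge × Bool) (hd : T.IsEdge d.1) : T.Edge × Bool := (⟨d.1, hd⟩, d.2)

/-- The label of a dart of the tower. -/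
def label (d : T.Edge × Bool) : GridEdge × Bool := (d.1.1, d.2)

theorem label_injective : Function.Injective T.label :=
  Subtype.val_injective.prodMap Function.injective_id

/-- The rotation on the darts of the tower. -/
def rotateDart (d : T.Edge × Bool) : T.Edge × Bool :=
  dart (T.rotate (T.label d)) (isEdge_rotate d.1.2)

/-- The inverse rotation on the darts of the tower. -/
def rotateInvDart (d : T.Edge × Bool) : T.Edge × Bool :=
  dart (T.rotateInv (T.label d)) (isEdge_rotateInv d.1.2)

theorem rotateDart_rotateInvDart (d : T.Edge × Bool) : T.rotateDart (T.rotateInvDart d) = d :=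
  T.label_injective (rotate_rotateInv d.1.2)

theorem rotateInvDart_rotateDart (d : T.Edge × Bool) : T.rotateInvDart (T.rotateDart d) = d :=
  have hsurj : Function.Surjective T.rotateDart :=
    Function.RightInverse.surjective T.rotateDart_rotateInvDart
  Function.RightInverse.leftInverse_of_injective T.rotateDart_rotateInvDart
    (Finite.injective_iff_surjective.2 hsurj) d

/-- The rotation as a permutation of the darts. -/
def rotation : Equiv.Perm (T.Edge × Bool) where
  toFun := T.rotateDart
  invFun := T.rotateInvDart
  left_inv := T.rotateInvDart_rotateDart
  right_inv := T.rotateDart_rotateInvDart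

/-- The dart of the outermost ring. -/
def rootDart : T.Edge × Bool := dart (.ring T.height 0, false) ⟨le_rfl, Nat.zero_le _⟩

theorem mem_of_closed {O : Set (T.Edge × Bool)} (hroot : T.rootDart ∈ O)
    (hrotation : Set.MapsTo T.rotation O O) (hrev : Set.MapsTo dartRev O O)
    (d : T.Edge × Bool) : d ∈ O := by
  have hrotationInv : Set.MapsTo T.rotation.symm O O :=
    Equiv.Perm.perm_symm_mapsTo_of_mapsTo _ hrotation
  have hlabel : T.label d ∈ T.label '' O := by
    refine dart_mem (O := T.label '' O) ?_ ?_ ⟨_, hroot, rfl⟩ ?_ d.1.2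
    · rintro _ ⟨d, hd, rfl⟩
      exact ⟨_, hrotationInv hd, rfl⟩
    · rintro _ ⟨d, hd, rfl⟩
      exact ⟨_, hrev hd, rfl⟩
    · rintro _ ⟨d, hd, rfl⟩
      exact ⟨_, hrotation hd, rfl⟩
  exact (T.label_injective.mem_set_image).1 hlabel

/-- The start vertex of a dart of the tower. -/
def vert (d : T.Edge × Bool) : T.Vertex := ⟨T.dartVertex (T.label d), isVertex_dartVertex d.1.2⟩

/-- The face to the right of a dart of the tower. -/
def face (d : T.Edge × Bool) : T.Face := ⟨T.dartFace (T.label d), isFace_dartFace d.1.2⟩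

theorem vert_surjective : Function.Surjective T.vert :=
  fun ⟨(l, i), hx⟩ => ⟨dart (.ring l i, false) hx, rfl⟩

theorem dartFace_ring_height (i : ℕ) : T.dartFace (.ring T.height i, true) = .outer := by
  simp only [dartFace, lt_irrefl, if_false]

theorem face_surjective : Function.Surjective T.face
  | ⟨.annulus l i, h⟩ => ⟨dart (.up l i, false) h, rfl⟩
  | ⟨.disc 0, _⟩ =>
    ⟨dart (.chord 0, false) (Nat.pos_of_ne_zero (T.matching.partner_ne T.size_pos)),
      Subtype.ext (congrArg TowerFace.disc T.matching.region_zero)⟩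
  | ⟨.disc (j + 1), h⟩ =>
    ⟨dart (.ring 0 j, false) ⟨Nat.zero_le _, le_last_zero_of_lt_partner h⟩,
      Subtype.ext (congrArg TowerFace.disc (T.matching.region_succ_of_lt_partner h))⟩
  | ⟨.outer, _⟩ => ⟨dartRev T.rootDart, Subtype.ext (T.dartFace_ring_height 0)⟩

/-- The ring tower as a planar map. -/
def toPlanarMap : PlanarMap where
  V := T.Vertex
  F := T.Face
  E := T.Edge
  σ := T.rotation
  vert := T.vert
  face := T.face
  vert_σ d := Subtype.ext (dartVertex_rotate d.1.2)
  face_σ d := Subtype.ext (dartFace_rotate d.1.2)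
  vert_surjective := T.vert_surjective
  face_surjective := T.face_surjective
  root := T.rootDart
  connected _ := T.mem_of_closed
  euler := T.card_vertex_add_card_face

end RingTower

/-! ### Degrees and diameters of the ring tower -/

section Darts

variable {V E : Type}

theorem vertDegree_dartEnds [Finite E] (lab : E × Bool → V) (v : V) :
    vertDegree (dartEnds lab) v = {d | lab d = v}.ncard := by
  set A : Set E := {e | lab (e, false) = v}
  set B : Set E := {e | lab (e, true) = v}
  have hunion : {e | v ∈ dartEnds lab e} = A ∪ B := by
    ext e
    simp only [dartEnds, Sym2.mem_iff, Set.mem_ofPred_eq, Set.mem_union, A, B, eq_comm]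
  have hinter : {e | dartEnds lab e = s(v, v)} = A ∩ B := by
    ext e
    simp [dartEnds, A, B]
  have hdarts : {d | lab d = v} = (·, false) '' A ∪ (·, true) '' B := by
    ext ⟨e, _ | _⟩ <;> simp [A, B]
  have hdisjoint : Disjoint ((·, false) '' A : Set (E × Bool)) ((·, true) '' B) := by
    simp [Set.disjoint_left]
  rw [vertDegree, hunion, hinter, Set.ncard_union_add_ncard_inter, hdarts,
    Set.ncard_union_eq hdisjoint, Set.ncard_image_of_injective _ (Prod.mk_left_injective _),
    Set.ncard_image_of_injective _ (Prod.mk_left_injective _)]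

theorem vertDegree_dartEnds_le_ncard [Finite E] {D : Type} {lab : E × Bool → V} {v : V}
    {g : E × Bool → D} (hg : Function.Injective g) {S : Set D} (hS : S.Finite)
    (h : ∀ d, lab d = v → g d ∈ S) :
    vertDegree (dartEnds lab) v ≤ S.ncard :=
  (vertDegree_dartEnds lab v).trans_le (Set.ncard_le_ncard_of_injOn g h hg.injOn hS)

theorem edgeReachIn_dartEnds (lab : E × Bool → V) (d : E × Bool) :
    edgeReachIn (dartEnds lab) Set.univ 1 (lab d) (lab (dartRev d)) :=
  .single (Set.mem_univ _) (dartEnds_fst lab d)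

end Darts

namespace RingTower

variable {T : RingTower} {l i j : ℕ} {d : GridEdge × Bool}

theorem chordDart_of_lt (h : i < T.matching.partner i) : T.chordDart i = (.chord i, false) :=
  if_pos h

theorem chordDart_partner (h : i < T.matching.partner i) :
    T.chordDart (T.matching.partner i) = (.chord i, true) := by
  rw [chordDart, T.matching.partner_partner, if_neg h.not_gt]

variable (T) in
theorem eq_firstChild_parent_or (l i : ℕ) :
    i = T.firstChild l (T.parent l i) ∨ i = T.firstChild l (T.parent l i) + 1 := by
  unfold firstChild parent
  split_ifs <;> omega

variable (T) in
/-- At most six labels, among them those of all darts starting at the vertex `x`. Some of the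
others need not be darts of the tower. -/
def vertexDarts (x : ℕ × ℕ) : Finset (GridEdge × Bool) :=
  {(.ring x.1 x.2, false), (.ring x.1 (T.prev x.1 x.2), true), (.up x.1 x.2, false),
    (.up (x.1 - 1) (T.firstChild (x.1 - 1) x.2), true),
    (.up (x.1 - 1) (T.firstChild (x.1 - 1) x.2 + 1), true), T.chordDart x.2}

theorem mem_vertexDarts : ∀ {d}, T.IsEdge d.1 → d ∈ T.vertexDarts (T.dartVertex d)
  | (.ring _ _, false), _ => by simp [vertexDarts, dartVertex]
  | (.ring _ _, true), _ => by simp [vertexDarts, dartVertex, T.prev_next]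
  | (.up _ _, false), _ => by simp [vertexDarts, dartVertex]
  | (.up l i, true), _ => by
    rcases T.eq_firstChild_parent_or l i with h | h <;> simp [vertexDarts, dartVertex, ← h]
  | (.chord _, false), h => by simp [vertexDarts, dartVertex, chordDart_of_lt h]
  | (.chord _, true), h => by simp [vertexDarts, dartVertex, chordDart_partner h]

theorem vertDegree_vert_le (v : T.Vertex) : vertDegree (dartEnds T.vert) v ≤ 6 := by
  refine (vertDegree_dartEnds_le_ncard T.label_injective (T.vertexDarts v.1).finite_toSet ?_).trans
    (Set.ncard_coe_finset _ ▸ Finset.card_le_six)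
  rintro d rfl
  exact mem_vertexDarts d.1.2

variable (T) in
/-- The darts whose face is `TowerFace.annulus l i`. -/
def annulusDarts (l i : ℕ) : Finset (GridEdge × Bool) :=
  {(.ring (l + 1) (T.parent l i), false), (.ring l i, true), (.up l i, false),
    (.up l (T.next l i), true)}

theorem mem_annulusDarts :
    ∀ {d}, T.IsEdge d.1 → T.dartFace d = .annulus l i → d ∈ T.annulusDarts l i
  | (.ring (_ + 1) _, false), ⟨_, hi⟩, h => by
    obtain ⟨rfl, rfl⟩ := TowerFace.annulus.inj h
    simp [annulusDarts, T.parent_lastChild hi]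
  | (.ring _ _, true), _, h => by
    simp only [dartFace] at h
    split_ifs at h
    obtain ⟨rfl, rfl⟩ := TowerFace.annulus.inj h
    simp [annulusDarts]
  | (.up _ _, false), _, h => by
    obtain ⟨rfl, rfl⟩ := TowerFace.annulus.inj h
    simp [annulusDarts]
  | (.up _ _, true), ⟨_, hi⟩, h => by
    obtain ⟨rfl, rfl⟩ := TowerFace.annulus.inj h
    simp [annulusDarts, T.next_prev hi]

theorem eq_ring_of_dartFace_eq_outer :
    ∀ {d}, T.IsEdge d.1 → T.dartFace d = .outer → d = (.ring T.height 0, true)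
  | (.ring 0 _, false), _, h => nomatch h
  | (.ring (_ + 1) _, false), _, h => nomatch h
  | (.ring l i, true), ⟨hl, hi⟩, h => by
    simp only [dartFace] at h
    split_ifs at h with hlt
    obtain rfl : l = T.height := hl.antisymm (not_lt.1 hlt)
    rw [T.last_height, Nat.le_zero] at hi
    rw [hi]

variable (T) in
/-- The edges of the innermost ring on the boundary of the disc region `j`. -/
def discGaps (j : ℕ) : Set ℕ := {i | i ≤ T.last 0 ∧ T.matching.region (i + 1) = j}

theorem ncard_discGaps_le (j : ℕ) : (T.discGaps j).ncard ≤ T.matching.maxWidth + 1 := by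
  rw [← Nat.card_Iic, ← Set.ncard_coe_finset]
  refine Set.ncard_le_ncard_of_injOn (fun i => T.matching.rank (i + 1))
    (fun i _ => by simpa using T.matching.rank_le_maxWidth (i + 1)) ?_ (Finset.finite_toSet _)
  intro i hi i' hi' hrank
  exact Nat.succ_injective (T.matching.eq_of_region_eq_of_rank_eq (le_last_zero_iff.1 hi.1)
    (le_last_zero_iff.1 hi'.1) (hi.2.trans hi'.2.symm) hrank)

theorem prev_mem_discGaps (hi : i ≤ T.last 0) (h : T.matching.region i = j) :
    T.prev 0 i ∈ T.discGaps j :=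
  ⟨T.prev_le hi, by rw [← region_next, T.next_prev hi, h]⟩

theorem exists_mem_discGaps_of_dartFace_eq_disc : ∀ {d}, T.IsEdge d.1 → T.dartFace d = .disc j →
    ∃ i ∈ T.discGaps j, d = (.ring 0 i, false) ∨ d = T.chordDart (T.next 0 i)
  | (.ring 0 i, false), ⟨_, hi⟩, h => ⟨i, ⟨hi, TowerFace.disc.inj h⟩, .inl rfl⟩
  | (.ring (_ + 1) _, false), _, h => nomatch h
  | (.ring l _, true), _, h => by
    simp only [dartFace] at h
    split_ifs at h
  | (.chord _, false), hi, h =>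
    ⟨_, prev_mem_discGaps (le_last_zero_of_lt_partner hi) (TowerFace.disc.inj h), .inr (by
      rw [T.next_prev (le_last_zero_of_lt_partner hi), chordDart_of_lt hi])⟩
  | (.chord _, true), hi, h =>
    ⟨_, prev_mem_discGaps (partner_le_last_zero_of_lt_partner hi) (TowerFace.disc.inj h), .inr (by
      rw [T.next_prev (partner_le_last_zero_of_lt_partner hi), chordDart_partner hi])⟩

theorem finite_discGaps (j : ℕ) : (T.discGaps j).Finite :=
  (Set.finite_Iic (T.last 0)).subset fun _ hi => hi.1

theorem vertDegree_face_disc_le (hj : T.IsFace (.disc j)) :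
    vertDegree (dartEnds T.face) ⟨.disc j, hj⟩ ≤ 2 * (T.matching.maxWidth + 1) := by
  have hfin := T.finite_discGaps j
  calc vertDegree (dartEnds T.face) ⟨.disc j, hj⟩
      ≤ ((fun i => (GridEdge.ring 0 i, false)) '' T.discGaps j ∪
          (fun i => T.chordDart (T.next 0 i)) '' T.discGaps j).ncard := by
        refine vertDegree_dartEnds_le_ncard T.label_injective
          ((hfin.image _).union (hfin.image _)) fun d hd => ?_
        obtain ⟨i, hi, h | h⟩ :=
          exists_mem_discGaps_of_dartFace_eq_disc d.1.2 (congrArg Subtype.val hd)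
        exacts [.inl ⟨i, hi, h.symm⟩, .inr ⟨i, hi, h.symm⟩]
    _ ≤ (T.discGaps j).ncard + (T.discGaps j).ncard :=
        (Set.ncard_union_le _ _).trans
          (add_le_add (Set.ncard_image_le hfin) (Set.ncard_image_le hfin))
    _ ≤ 2 * (T.matching.maxWidth + 1) := by linarith [T.ncard_discGaps_le j]

theorem vertDegree_face_le (f : T.Face) :
    vertDegree (dartEnds T.face) f ≤ max 4 (2 * (T.matching.maxWidth + 1)) := by
  rcases f with ⟨⟨l, i⟩ | j | _, hf⟩
  · refine le_max_of_le_left ?_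
    refine (vertDegree_dartEnds_le_ncard T.label_injective (T.annulusDarts l i).finite_toSet
      fun d hd => mem_annulusDarts d.1.2 (congrArg Subtype.val hd)).trans ?_
    exact Set.ncard_coe_finset _ ▸ Finset.card_le_four
  · exact le_max_of_le_right (vertDegree_face_disc_le hf)
  · refine le_max_of_le_left ?_
    refine (vertDegree_dartEnds_le_ncard T.label_injective (Set.finite_singleton _)
      fun d hd => eq_ring_of_dartFace_eq_outer d.1.2 (congrArg Subtype.val hd)).trans ?_
    rw [Set.ncard_singleton]
    norm_num

end RingTower

namespace RingTower

variable {T : RingTower} {l i j : ℕ}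

variable (T) in
/-- The only vertex of the outermost ring. -/
def apex : T.Vertex := ⟨(T.height, 0), le_rfl, Nat.zero_le _⟩

variable (T) in
/-- The unbounded face. -/
def outerFace : T.Face := ⟨.outer, trivial⟩

theorem edgeReachIn_apex (hl : l ≤ T.height) (hi : i ≤ T.last l) :
    edgeReachIn (dartEnds T.vert) Set.univ (T.height - l) ⟨(l, i), hl, hi⟩ T.apex := by
  induction hl using Nat.decreasingInduction generalizing i with
  | self =>
    rw [T.last_height, Nat.le_zero] at hi
    subst hi
    rw [Nat.sub_self]
    rfl
  | of_succ l hl ih =>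
    have hstep := edgeReachIn_dartEnds T.vert (dart (.up l i, false) ⟨hl, hi⟩)
    rw [show T.height - l = 1 + (T.height - (l + 1)) by omega]
    exact hstep.trans (ih (T.parent_le hi))

theorem edgeDiam_vert_le : edgeDiam (dartEnds T.vert) Set.univ ≤ 2 * T.height :=
  edgeDiam_le_two_mul_of_center T.apex fun ⟨(l, _), hl, hi⟩ =>
    ⟨T.height - l, Nat.sub_le _ _, edgeReachIn_apex hl hi⟩

theorem eq_lastChild_parent_or (hi : i ≤ T.last l) :
    i = T.lastChild l (T.parent l i) ∨ i + 1 = T.lastChild l (T.parent l i) := by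
  unfold lastChild parent
  split_ifs <;> omega

theorem exists_edgeReachIn_lastChild (hl : l < T.height) (hi : i ≤ T.last l) :
    ∃ k ≤ 1, edgeReachIn (dartEnds T.face) Set.univ k ⟨.annulus l i, hl, hi⟩
      ⟨.annulus l (T.lastChild l (T.parent l i)), hl, T.lastChild_le (T.parent_le hi)⟩ := by
  rcases T.eq_lastChild_parent_or hi with h | h
  · exact ⟨0, zero_le_one, Subtype.ext (congrArg (TowerFace.annulus l) h)⟩
  · have hsucc : i + 1 ≤ T.last l := h ▸ T.lastChild_le (T.parent_le hi)
    have hstep := edgeReachIn_dartEnds T.face (dart (.up l (i + 1), true) ⟨hl, hsucc⟩)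
    simp only [← h]
    exact ⟨1, le_rfl, hstep⟩

theorem face_ring_of_lt (hl : l < T.height) (hi : i ≤ T.last l) :
    T.face (dart (.ring l i, true) ⟨hl.le, hi⟩) = ⟨.annulus l i, hl, hi⟩ := by
  simp only [face, label, dart, dartFace, if_pos hl]

theorem exists_edgeReachIn_outerFace (hl : l ≤ T.height) (hi : i ≤ T.last l) :
    ∃ k ≤ 2 * (T.height - l), edgeReachIn (dartEnds T.face) Set.univ k
      (T.face (dart (.ring l i, true) ⟨hl, hi⟩)) T.outerFace := by
  induction hl using Nat.decreasingInduction generalizing i with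
  | self => exact ⟨0, Nat.zero_le _, Subtype.ext (T.dartFace_ring_height i)⟩
  | of_succ l hl ih =>
    rw [face_ring_of_lt hl hi]
    obtain ⟨k, hk, hsideways⟩ := exists_edgeReachIn_lastChild hl hi
    have hcross := edgeReachIn_dartEnds T.face
      (dart (.ring (l + 1) (T.parent l i), false) ⟨hl, T.parent_le hi⟩)
    obtain ⟨k', hk', hrest⟩ := ih (T.parent_le hi)
    exact ⟨k + 1 + k', by omega, (hsideways.trans hcross).trans hrest⟩

theorem discGaps_nonempty : ∀ {j}, T.IsFace (.disc j) → (T.discGaps j).Nonempty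
  | 0, _ => ⟨T.prev 0 0, prev_mem_discGaps (Nat.zero_le _) T.matching.region_zero⟩
  | j + 1, hj => ⟨j, le_last_zero_of_lt_partner hj, T.matching.region_succ_of_lt_partner hj⟩

theorem exists_edgeReachIn_outerFace_of_disc (hj : T.IsFace (.disc j)) :
    ∃ k ≤ 2 * T.height + 1,
      edgeReachIn (dartEnds T.face) Set.univ k ⟨.disc j, hj⟩ T.outerFace := by
  obtain ⟨i, hi, rfl⟩ := discGaps_nonempty hj
  have hcross := edgeReachIn_dartEnds T.face (dart (.ring 0 i, false) ⟨Nat.zero_le _, hi⟩)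
  obtain ⟨k, hk, hrest⟩ := exists_edgeReachIn_outerFace (Nat.zero_le _) hi
  exact ⟨1 + k, by omega, hcross.trans hrest⟩

theorem edgeDiam_face_le :
    edgeDiam (dartEnds T.face) Set.univ ≤ 2 * (2 * T.height + 1) := by
  refine edgeDiam_le_two_mul_of_center T.outerFace ?_
  rintro ⟨⟨l, i⟩ | j | _, hf⟩
  · obtain ⟨k, hk, h⟩ := exists_edgeReachIn_outerFace hf.1.le hf.2
    exact ⟨k, by omega, face_ring_of_lt hf.1 hf.2 ▸ h⟩
  · exact exists_edgeReachIn_outerFace_of_disc hf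
  · exact ⟨0, Nat.zero_le _, rfl⟩

/-! ### Sweeps of the ring tower -/

open GridEdge in
theorem isEdge_of_mem_box {e : GridEdge}
    (he : e ∈ box T.matching.partner (T.thickness + 1) 0 T.matching.size) : T.IsEdge e := by
  have hheight := T.thickness_lt_height
  rcases e with ⟨l, i⟩ | ⟨l, i⟩ | i
  · obtain ⟨hl, -, hi⟩ := he
    exact ⟨by omega, (T.le_last_iff_of_le (by omega)).2 (by omega)⟩
  · obtain ⟨hl, -, hi⟩ := he
    exact ⟨by omega, (T.le_last_iff_of_le (by omega)).2 hi⟩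
  · exact he.1

open GridEdge in
theorem dartEnds_dartVertex_of_mem_box {e : GridEdge}
    (he : e ∈ box T.matching.partner (T.thickness + 1) 0 T.matching.size) :
    dartEnds T.dartVertex e = ends T.matching.partner e := by
  rcases e with ⟨l, i⟩ | ⟨l, i⟩ | i
  · obtain ⟨hl, -, hi⟩ := he
    have hlast : i < T.last l := (T.le_last_iff_of_le (by omega)).2 hi
    simp only [dartEnds, dartVertex, ends, T.next_of_lt hlast]
  · obtain ⟨hl, -, -⟩ := he
    have hlt : l < T.thickness := by omega
    simp only [dartEnds, dartVertex, ends, parent, if_pos hlt]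
  · rfl

open GridEdge in
theorem edgeBoundary_image_inter_box_subset (A : Set T.Vertex) :
    edgeBoundary (ends T.matching.partner) (Subtype.val '' A) ∩
      box T.matching.partner (T.thickness + 1) 0 T.matching.size ⊆
    Subtype.val '' edgeBoundary (dartEnds T.vert) A := fun e ⟨hboundary, hbox⟩ =>
  ⟨⟨e, isEdge_of_mem_box hbox⟩, mem_edgeBoundary_of_mem_edgeBoundary_image Subtype.val_injective
    (dartEnds_dartVertex_of_mem_box hbox).symm hboundary, rfl⟩

theorem exists_mul_le_ncard_edgeBoundary {k : ℕ} {A : ℕ → Set T.Vertex}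
    (hT : T.matching = .ternaryTree (T.thickness + 1) k) (hA : IsSweep A Set.univ) :
    ∃ t, (k + 1) * (T.thickness + 1) ≤ (edgeBoundary (dartEnds T.vert) (A t)).ncard := by
  have hoccurs : (NoncrossingMatching.ternaryTree (T.thickness + 1) k).OccursAt
      T.matching.partner 0 := fun i _ => by rw [zero_add, zero_add, hT]
  obtain ⟨t, -, -, -, -, hcard⟩ := hoccurs.exists_isCriticalLeaf (hA.image Subtype.val)
    (Nat.succ_pos _) fun l hl i hi => by
      rw [zero_add, ← hT] at hi
      have hheight := T.thickness_lt_height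
      exact ⟨⟨(l, i), by omega, (T.le_last_iff_of_le (by omega)).2 hi⟩, trivial, rfl⟩
  refine ⟨t, ?_⟩
  rw [zero_add, ← hT] at hcard
  have hle := hcard.trans (Set.encard_le_encard (edgeBoundary_image_inter_box_subset (A t)))
  rw [Subtype.val_injective.encard_image, ← Set.Finite.cast_ncard_eq (Set.toFinite _)] at hle
  exact_mod_cast hle

theorem mul_le_edgeDiam_add_edgeDiam {k : ℕ} {S : Set T.Edge}
    (hT : T.matching = .ternaryTree (T.thickness + 1) k)
    (hS : IsSpanningTree (dartEnds T.vert) S) :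
    (k + 1) * (T.thickness + 1) ≤
      13 * (edgeDiam (dartEnds T.vert) S + edgeDiam (dartEnds T.face) Sᶜ) + 6 := by
  obtain ⟨A, hA, hboundary⟩ :=
    T.toPlanarMap.exists_isSweep_ncard_edgeBoundary_le vertDegree_vert_le hS
  obtain ⟨t, ht⟩ := exists_mul_le_ncard_edgeBoundary hT hA
  exact ht.trans (hboundary t)

end RingTower

/-! ### The family -/

theorem three_pow_mul_le_two_pow {n : ℕ} (hn : 1 ≤ n) :
    3 ^ (n + 5) * (5 * n + 4) ≤ 2 ^ (13 * n) := by
  induction n, hn using Nat.le_induction with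
  | base => norm_num
  | succ n _ ih =>
    calc 3 ^ (n + 1 + 5) * (5 * (n + 1) + 4)
        ≤ 2 ^ 13 * (3 ^ (n + 5) * (5 * n + 4)) := by
          rw [show n + 1 + 5 = n + 5 + 1 by omega, pow_succ, mul_assoc, mul_left_comm (2 ^ 13)]
          exact Nat.mul_le_mul_left _ (by omega)
      _ ≤ 2 ^ 13 * 2 ^ (13 * n) := Nat.mul_le_mul_left _ ih
      _ = 2 ^ (13 * (n + 1)) := by ring

/-- The ring tower over a ternary tree of depth and arc multiplicity linear in `m`. Its height is
linear in `m` because the tree has only exponentially many points. -/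
def ternaryTower (m : ℕ) : RingTower where
  matching := .ternaryTree (m + 1) (m + 6)
  thickness := m
  height := 14 * (m + 1)
  thickness_lt_height := by omega
  size_pos := by
    rw [NoncrossingMatching.size_ternaryTree_succ (m + 1) (m + 5)]
    exact Nat.succ_pos _
  size_sub_one_lt := by
    have hsize := NoncrossingMatching.size_ternaryTree (m + 1) (m + 6)
    have hpow : 3 ^ (m + 6) * (5 * (m + 1) + 4) ≤ 2 ^ (13 * (m + 1)) :=
      three_pow_mul_le_two_pow (Nat.succ_pos m)
    calc (NoncrossingMatching.ternaryTree (m + 1) (m + 6)).size - 1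
        < 3 ^ (m + 6) * (5 * (m + 1) + 4) := by omega
      _ ≤ 2 ^ (13 * (m + 1)) := hpow
      _ ≤ 2 ^ (14 * (m + 1) - m) := Nat.pow_le_pow_right two_pos (by omega)

/-- The plane graph with one vertex and no edges. -/
def singleVertex : PlaneDualPair where
  V := Unit
  F := Unit
  E := Empty
  ends := Empty.elim
  dualEnds := Empty.elim
  conn _ _ := .refl
  dual_conn _ _ := .refl
  acyclic_iff_dual_conn _ := iff_of_true (fun e => e.elim) fun _ _ => .refl
  conn_iff_dual_acyclic _ := iff_of_true (fun _ _ => .refl) fun e => e.elim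

/-- The ring towers, started with the only plane graph for which both diameters vanish. -/
def towerFamily : ℕ → PlaneDualPair
  | 0 => singleVertex
  | m + 1 => (ternaryTower m).toPlanarMap.toPlaneDualPair

theorem vertDegree_of_isEmpty {V E : Type} [IsEmpty E] (ends : E → Sym2 V) (v : V) :
    vertDegree ends v = 0 := by
  simp [vertDegree, Set.eq_empty_of_isEmpty]

theorem vertDegree_ends_towerFamily_le :
    ∀ n (v : (towerFamily n).V), vertDegree (towerFamily n).ends v ≤ 6
  | 0, v => (vertDegree_of_isEmpty (E := Empty) _ v).trans_le (Nat.zero_le _)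
  | _ + 1, v => RingTower.vertDegree_vert_le v

theorem vertDegree_dualEnds_towerFamily_le :
    ∀ n (f : (towerFamily n).F), vertDegree (towerFamily n).dualEnds f ≤ 6
  | 0, v => (vertDegree_of_isEmpty (E := Empty) _ v).trans_le (Nat.zero_le _)
  | m + 1, f => by
    have hwidth := NoncrossingMatching.maxWidth_ternaryTree_le (m + 1) (m + 6)
    exact (RingTower.vertDegree_face_le f).trans
      (max_le (by norm_num) (Nat.mul_le_mul_left 2 (Nat.succ_le_succ hwidth)))

theorem edgeDiam_towerFamily_add_edgeDiam_le : ∀ n,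
    edgeDiam (towerFamily n).ends Set.univ + edgeDiam (towerFamily n).dualEnds Set.univ ≤ 86 * n
  | 0 => by
    have hdiam (ends : Empty → Sym2 Unit) : edgeDiam ends Set.univ ≤ 2 * 0 :=
      edgeDiam_le_two_mul_of_center () fun _ => ⟨0, le_rfl, rfl⟩
    exact add_le_add (hdiam _) (hdiam _)
  | m + 1 => by
    have hvert := (ternaryTower m).edgeDiam_vert_le
    have hface := (ternaryTower m).edgeDiam_face_le
    calc _ ≤ 2 * (14 * (m + 1)) + 2 * (2 * (14 * (m + 1)) + 1) := add_le_add hvert hface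
      _ ≤ 86 * (m + 1) := by omega

theorem sq_le_edgeDiam_add_edgeDiam : ∀ n {T : Set (towerFamily n).E},
    IsSpanningTree (towerFamily n).ends T →
      n ^ 2 ≤ 13 * (edgeDiam (towerFamily n).ends T + edgeDiam (towerFamily n).dualEnds Tᶜ)
  | 0, _, _ => Nat.zero_le _
  | m + 1, _, hT => by
    have hlower : (m + 6 + 1) * (m + 1) ≤ 13 * _ + 6 :=
      RingTower.mul_le_edgeDiam_add_edgeDiam (T := ternaryTower m) rfl hT
    exact Nat.le_of_add_le_add_right ((by nlinarith : (m + 1) ^ 2 + 6 ≤ _).trans hlower)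

/-- There is a family `(Gₙ)` of finite connected planar graphs and constants
`C₁, C₂ > 0` such that all vertices of `Gₙ` and of the dual `Gₙ*` have degree at most `6`,
`Diam Gₙ + Diam Gₙ* ≤ C₁ n`, yet for every spanning tree `T` of `Gₙ` (with dual spanning
tree `T*`), `Diam T + Diam T* ≥ C₂ n²`.  In particular, there is no constant `C` such that
every finite connected planar graph `G` admits a spanning tree `T` with
`Diam T ≤ C ⬝ Diam G` and `Diam T* ≤ C ⬝ Diam G*`. -/
theorem no_uniform_dual_tree_diameter_bound :
    (∃ (Gfam : ℕ → PlaneDualPair) (C₁ C₂ : ℝ), 0 < C₁ ∧ 0 < C₂ ∧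
      ∀ n : ℕ,
        (∀ v : (Gfam n).V, vertDegree (Gfam n).ends v ≤ 6) ∧
        (∀ f : (Gfam n).F, vertDegree (Gfam n).dualEnds f ≤ 6) ∧
        ((edgeDiam (Gfam n).ends Set.univ + edgeDiam (Gfam n).dualEnds Set.univ : ℕ) : ℝ)
          ≤ C₁ * n ∧
        ∀ T : Set (Gfam n).E, IsSpanningTree (Gfam n).ends T →
          C₂ * (n : ℝ) ^ 2
            ≤ ((edgeDiam (Gfam n).ends T + edgeDiam (Gfam n).dualEnds Tᶜ : ℕ) : ℝ)) ∧
    ¬ ∃ C : ℝ, 0 < C ∧ ∀ P : PlaneDualPair, ∃ T : Set P.E, IsSpanningTree P.ends T ∧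
        ((edgeDiam P.ends T : ℕ) : ℝ) ≤ C * (edgeDiam P.ends Set.univ : ℕ) ∧
        ((edgeDiam P.dualEnds Tᶜ : ℕ) : ℝ) ≤ C * (edgeDiam P.dualEnds Set.univ : ℕ) := by
  refine ⟨⟨towerFamily, 86, 1 / 13, by norm_num, by norm_num, fun n =>
    ⟨vertDegree_ends_towerFamily_le n, vertDegree_dualEnds_towerFamily_le n,
      mod_cast edgeDiam_towerFamily_add_edgeDiam_le n, fun T hT => ?_⟩⟩, ?_⟩
  · have hlower := sq_le_edgeDiam_add_edgeDiam n hT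
    rify at hlower ⊢
    linarith
  · rintro ⟨C, hC, hbound⟩
    obtain ⟨n, hn⟩ := exists_nat_gt (13 * (86 * C))
    obtain ⟨T, hT, hprimal, hdual⟩ := hbound (towerFamily n)
    have hupper := edgeDiam_towerFamily_add_edgeDiam_le n
    have hlower := sq_le_edgeDiam_add_edgeDiam n hT
    rify at hupper hlower
    have hn_pos : (0 : ℝ) < n := lt_trans (by positivity) hn
    have hsq : (n : ℝ) ^ 2 ≤ 13 * (86 * C) * n := by
      linarith [mul_le_mul_of_nonneg_left hupper hC.le]
    exact (mul_lt_mul_of_pos_right hn hn_pos).not_ge (sq (n : ℝ) ▸ hsq)
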